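/- arXiv:0808.0752 — 6 statements merged into one kernel-verified Lean document; each statement's English description precedes it below -/
import Mathlib

section
/- Let G be a group and let c₁, c₂, c₃, c₄, c₅, x, δ ∈ G. Assume: the braid relations c₁*c₂*c₁ = c₂*c₁*c₂ and c₄*c₅*c₄ = c₅*c₄*c₅; the chain relation (c₅*c₄)^6 = δ; the lantern relation δ*x*c₃ = c₁*c₁*c₅*c₅; and that c₁ commutes with each of x, c₃, c₄, c₅. Then (c₁*c₂)^2 * ((c₅*c₄)^2)⁻¹ = c₁*c₁*c₂*c₁⁻¹*x*c₃*c₄*c₅*c₅*c₄*c₅*c₄, and consequently ((c₁*c₂)^2 * ((c₅*c₄)^2)⁻¹)^3 = c₁ * (c₁*c₂*x*c₃*c₄*c₅*c₅*c₄*c₅*c₄)^3 * c₁⁻¹. -/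
/-!
Put `T = x c₃ c₄ c₅² c₄ c₅ c₄`. The braid relation between `c₄` and `c₅` gives
`c₅² (c₄ c₅² c₄ c₅ c₄) = (c₅ c₄)⁴`, so the chain and lantern relations say that
`T = δ⁻¹ c₁² (c₅ c₄)⁴ = c₁² (c₅ c₄)⁻²`. The braid relation between `c₁` and `c₂` gives
`(c₁ c₂)² = c₁² c₂ c₁⁻¹ c₁²`, whence `(c₁ c₂)² (c₅ c₄)⁻² = c₁² c₂ c₁⁻¹ T`.
As `c₁` commutes with `(c₅ c₄)²`, it commutes with `T`, so this is the conjugate of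
`c₁ c₂ T` by `c₁`.
-/

section Monoid

variable {M : Type*} [Monoid M] {a b : M}

theorem mul_sq_of_braid (h : a * b * a = b * a * b) : (a * b) ^ 2 = a * a * b * a :=
  calc (a * b) ^ 2 = a * (b * a * b) := by simp only [pow_two, mul_assoc]
    _ = a * a * b * a := by rw [← h]; simp only [mul_assoc]

theorem mul_self_mul_sq_of_braid (h : a * b * a = b * a * b) :
    (a * a * b) ^ 2 = (a * b) ^ 3 :=
  calc (a * a * b) ^ 2 = a * a * b * a * (a * b) := by simp only [pow_two, mul_assoc]
    _ = (a * b) ^ 3 := by rw [← mul_sq_of_braid h, ← pow_succ]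

theorem mul_pow_four_of_braid (h : a * b * a = b * a * b) :
    (a * b) ^ 4 = a * a * (b * a * a * b * a * b) :=
  calc (a * b) ^ 4 = (a * a * b) ^ 2 * (a * b) := by rw [mul_self_mul_sq_of_braid h, ← pow_succ]
    _ = a * a * (b * a * a * b * a * b) := by simp only [pow_two, mul_assoc]

end Monoid

section Group

variable {G : Type*} [Group G] {a b s t y : G}

theorem conj_mul_eq_conj_of_commute (h : Commute a t) (b : G) :
    a * b * a⁻¹ * t = a * (b * t) * a⁻¹ := by
  simp only [mul_assoc, h.inv_left.eq]

theorem mul_eq_mul_inv_of_chain_lantern (hbraid : a * b * a = b * a * b)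
    (hs : Commute s ((a * b) ^ 2)) (hlantern : (a * b) ^ 6 * y = s * a * a) :
    y * (b * a * a * b * a * b) = s * ((a * b) ^ 2)⁻¹ := by
  have hs6 : Commute s ((a * b) ^ 6) := by simpa only [← pow_mul] using hs.pow_right 3
  rw [eq_mul_inv_iff_mul_eq]
  apply mul_left_cancel (a := (a * b) ^ 6)
  calc (a * b) ^ 6 * (y * (b * a * a * b * a * b) * (a * b) ^ 2)
      = (a * b) ^ 6 * y * (b * a * a * b * a * b) * (a * b) ^ 2 := by simp only [mul_assoc]
    _ = s * (a * a * (b * a * a * b * a * b)) * (a * b) ^ 2 := by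
        rw [hlantern]; simp only [mul_assoc]
    _ = s * (a * b) ^ 6 := by rw [← mul_pow_four_of_braid hbraid, mul_assoc, ← pow_add]
    _ = (a * b) ^ 6 * s := hs6.eq

end Group

theorem genus_two_word_general {G : Type*} [Group G] (c₁ c₂ c₃ c₄ c₅ x δ : G)
    (hb₁ : c₁ * c₂ * c₁ = c₂ * c₁ * c₂)
    (hb₂ : c₄ * c₅ * c₄ = c₅ * c₄ * c₅)
    (hchain : (c₅ * c₄) ^ 6 = δ)
    (hlantern : δ * x * c₃ = c₁ * c₁ * c₅ * c₅)
    (hcomm : Commute c₁ ((c₅ * c₄) ^ 2)) :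
    (c₁ * c₂) ^ 2 * ((c₅ * c₄) ^ 2)⁻¹ =
        c₁ * c₁ * c₂ * c₁⁻¹ * x * c₃ * c₄ * c₅ * c₅ * c₄ * c₅ * c₄ ∧
    (c₁ * c₂) ^ 2 * ((c₅ * c₄) ^ 2)⁻¹ =
        c₁ * (c₁ * c₂ * x * c₃ * c₄ * c₅ * c₅ * c₄ * c₅ * c₄) * c₁⁻¹ := by
  obtain ⟨T, hT⟩ : ∃ T, T = x * c₃ * (c₄ * c₅ * c₅ * c₄ * c₅ * c₄) := ⟨_, rfl⟩
  have hT_eq : T = c₁ * c₁ * ((c₅ * c₄) ^ 2)⁻¹ :=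
    hT.trans <| mul_eq_mul_inv_of_chain_lantern hb₂.symm (hcomm.mul_left hcomm)
      (by rw [hchain, ← mul_assoc, hlantern])
  have hT_comm : Commute c₁ T :=
    hT_eq ▸ ((Commute.refl c₁).mul_right (Commute.refl c₁)).mul_right hcomm.inv_right
  have hword : (c₁ * c₂) ^ 2 * ((c₅ * c₄) ^ 2)⁻¹ = c₁ * (c₁ * c₂) * c₁⁻¹ * T := by
    rw [mul_sq_of_braid hb₁, hT_eq]; group
  constructor
  · simpa only [hT, mul_assoc] using hword
  · simpa only [hT, mul_assoc] using hword.trans (conj_mul_eq_conj_of_commute hT_comm (c₁ * c₂))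

theorem genus_two_word {G : Type*} [Group G] (c₁ c₂ c₃ c₄ c₅ x δ : G)
    (hb₁ : c₁ * c₂ * c₁ = c₂ * c₁ * c₂)
    (hb₂ : c₄ * c₅ * c₄ = c₅ * c₄ * c₅)
    (hchain : (c₅ * c₄) ^ 6 = δ)
    (hlantern : δ * x * c₃ = c₁ * c₁ * c₅ * c₅)
    (hc₁ : ∀ y ∈ [x, c₃, c₄, c₅], c₁ * y = y * c₁) :
    (c₁ * c₂) ^ 2 * ((c₅ * c₄) ^ 2)⁻¹ =
        c₁ * c₁ * c₂ * c₁⁻¹ * x * c₃ * c₄ * c₅ * c₅ * c₄ * c₅ * c₄ ∧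
    ((c₁ * c₂) ^ 2 * ((c₅ * c₄) ^ 2)⁻¹) ^ 3 =
        c₁ * (c₁ * c₂ * x * c₃ * c₄ * c₅ * c₅ * c₄ * c₅ * c₄) ^ 3 * c₁⁻¹ := by
  have hcomm : Commute c₁ (c₅ * c₄) := .mul_right (hc₁ c₅ (by simp)) (hc₁ c₄ (by simp))
  exact (genus_two_word_general c₁ c₂ c₃ c₄ c₅ x δ hb₁ hb₂ hchain hlantern
    (hcomm.pow_right 2)).imp_right fun hconj => by rw [hconj, conj_pow]
end

section
/- Let G be a group and let c₁, c₂, c₃, c₄, c₅, x, δ, k₁, h₁ ∈ G. Assume: the braid relation c₄*c₅*c₄ = c₅*c₄*c₅; the lantern relations δ*x*c₃ = c₁*c₁*c₅*c₅ and k₁*h₁*c₁ = c₃*c₃*c₅*c₅; that c₁ commutes with c₄ and with c₅; and that c₃ commutes with each of c₁, c₅, k₁, h₁. Set t₂ = c₃*c₄*c₃⁻¹ and s₂ = c₅⁻¹*c₄*c₅. Then (c₁*c₂*x*c₃*c₄*c₅*c₅*c₄*c₅*c₄)^3 = c₁ * (c₂*x*t₂*k₁*h₁*δ*x*s₂)^3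 * c₁⁻¹. -/
/-!
After the two lantern substitutions the middle `k₁ h₁ δ x` of the new word equals `c₃ c₅⁴ c₁`.
The leading `c₃` cancels the inverse in `t₂`, the braid relation turns `c₅² s₂` into `c₄ c₅ c₄`,
and `c₁` moves past `s₂` to the end of the word. Hence the two words themselves, and not only
their cubes, are conjugate by `c₁`.
-/

theorem mul_eq_of_lantern_pair {S : Type*} [RightCancelSemigroup S] {a b c p q : S}
    (hp : p * a = c * c * b) (hq : q * c = a * a * b)
    (hab : Commute a b) (hca : Commute c a) (hcb : Commute c b) :
    p * q = c * b * b * a := by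
  refine mul_right_cancel (b := c) ?_
  calc p * q * c = p * a * (a * b) := by rw [mul_assoc, hq, mul_assoc, mul_assoc]
    _ = c * c * b * (b * a) := by rw [hp, hab.eq]
    _ = c * (c * (b * (b * a))) := by simp only [mul_assoc]
    _ = c * (b * (b * a) * c) := by rw [(hcb.mul_right (hcb.mul_right hca)).eq]
    _ = c * b * b * a * c := by simp only [mul_assoc]

section Group

variable {G : Type*} [Group G]

theorem mul_self_mul_conj_of_braid {a b : G} (hab : a * b * a = b * a * b) :
    b * b * (b⁻¹ * a * b) = a * b * a := by
  rw [hab]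
  group

theorem conj_mul_lantern_pair_mul_conj {c₁ c₃ c₄ c₅ p q : G}
    (hb : c₄ * c₅ * c₄ = c₅ * c₄ * c₅)
    (hp : p * c₁ = c₃ * c₃ * (c₅ * c₅)) (hq : q * c₃ = c₁ * c₁ * (c₅ * c₅))
    (h₁₄ : Commute c₁ c₄) (h₁₅ : Commute c₁ c₅) (h₃₁ : Commute c₃ c₁) (h₃₅ : Commute c₃ c₅) :
    c₃ * c₄ * c₃⁻¹ * (p * q) * (c₅⁻¹ * c₄ * c₅) =
      c₃ * c₄ * c₅ * c₅ * c₄ * c₅ * c₄ * c₁ := by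
  have hpq : p * q = c₃ * (c₅ * c₅) * (c₅ * c₅) * c₁ :=
    mul_eq_of_lantern_pair hp hq (h₁₅.mul_right h₁₅) h₃₁ (h₃₅.mul_right h₃₅)
  have hs₂ : Commute c₁ (c₅⁻¹ * c₄ * c₅) := (h₁₅.inv_right.mul_right h₁₄).mul_right h₁₅
  calc c₃ * c₄ * c₃⁻¹ * (p * q) * (c₅⁻¹ * c₄ * c₅)
      = c₃ * c₄ * (c₅ * c₅) * (c₅ * c₅) * (c₁ * (c₅⁻¹ * c₄ * c₅)) := by rw [hpq]; group
    _ = c₃ * c₄ * (c₅ * c₅) * (c₅ * c₅ * (c₅⁻¹ * c₄ * c₅)) * c₁ := by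
        rw [hs₂.eq]; simp only [mul_assoc]
    _ = c₃ * c₄ * c₅ * c₅ * c₄ * c₅ * c₄ * c₁ := by
        rw [mul_self_mul_conj_of_braid hb]; simp only [mul_assoc]

theorem genus_two_alternate_general (c₁ c₂ c₃ c₄ c₅ x δ k₁ h₁ : G)
    (hb : c₄ * c₅ * c₄ = c₅ * c₄ * c₅)
    (hlantern₁ : δ * x * c₃ = c₁ * c₁ * c₅ * c₅)
    (hlantern₂ : k₁ * h₁ * c₁ = c₃ * c₃ * c₅ * c₅)
    (hc₁ : ∀ y ∈ [c₄, c₅], c₁ * y = y * c₁)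
    (hc₃ : ∀ y ∈ [c₁, c₅], c₃ * y = y * c₃) :
    c₁ * c₂ * x * c₃ * c₄ * c₅ * c₅ * c₄ * c₅ * c₄ =
      c₁ * (c₂ * x * (c₃ * c₄ * c₃⁻¹) * k₁ * h₁ * δ * x * (c₅⁻¹ * c₄ * c₅)) * c₁⁻¹ := by
  have hmiddle := conj_mul_lantern_pair_mul_conj hb
    (hlantern₂.trans (mul_assoc _ _ _)) (hlantern₁.trans (mul_assoc _ _ _))
    (hc₁ c₄ (by simp)) (hc₁ c₅ (by simp)) (hc₃ c₁ (by simp)) (hc₃ c₅ (by simp))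
  rw [eq_mul_inv_iff_mul_eq]
  calc c₁ * c₂ * x * c₃ * c₄ * c₅ * c₅ * c₄ * c₅ * c₄ * c₁
      = c₁ * c₂ * x * (c₃ * c₄ * c₅ * c₅ * c₄ * c₅ * c₄ * c₁) := by simp only [mul_assoc]
    _ = c₁ * c₂ * x *
          (c₃ * c₄ * c₃⁻¹ * (k₁ * h₁ * (δ * x)) * (c₅⁻¹ * c₄ * c₅)) := by rw [hmiddle]
    _ = c₁ * (c₂ * x * (c₃ * c₄ * c₃⁻¹) * k₁ * h₁ * δ * x * (c₅⁻¹ * c₄ * c₅)) := by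
        simp only [mul_assoc]

end Group

theorem genus_two_alternate {G : Type*} [Group G] (c₁ c₂ c₃ c₄ c₅ x δ k₁ h₁ : G)
    (hb : c₄ * c₅ * c₄ = c₅ * c₄ * c₅)
    (hlantern₁ : δ * x * c₃ = c₁ * c₁ * c₅ * c₅)
    (hlantern₂ : k₁ * h₁ * c₁ = c₃ * c₃ * c₅ * c₅)
    (hc₁ : ∀ y ∈ [c₄, c₅], c₁ * y = y * c₁)
    (hc₃ : ∀ y ∈ [c₁, c₅, k₁, h₁], c₃ * y = y * c₃) :
    (c₁ * c₂ * x * c₃ * c₄ * c₅ * c₅ * c₄ * c₅ * c₄) ^ 3 =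
      c₁ * (c₂ * x * (c₃ * c₄ * c₃⁻¹) * k₁ * h₁ * δ * x * (c₅⁻¹ * c₄ * c₅)) ^ 3 * c₁⁻¹ := by
  rw [genus_two_alternate_general c₁ c₂ c₃ c₄ c₅ x δ k₁ h₁ hb hlantern₁ hlantern₂ hc₁
    fun y hy ↦ hc₃ y (List.mem_append_left [k₁, h₁] hy), conj_pow]
end

section
/- Let G be a group and let c₁, c₂, c₃, c₄, c₅, c₆, c₇, e₁, f₁, x₁, x₂, x̄₂, δ₁, δ₂, t, v ∈ G. Assume all the hypotheses of the genus-3 computation, namely: the braid relations c₁*c₂*c₁ = c₂*c₁*c₂, c₄*e₁*c₄ = e₁*c₄*e₁, c₄*f₁*c₄ = f₁*c₄*f₁, c₆*c₇*c₆ = c₇*c₆*c₇; the chain relation (c₄*e₁*c₄*f₁)^3 = δ₁*δ₂; the lantern relations δ₁*x₁*c₃ = c₁*c₁*e₁*f₁ and δ₂*x₂*c₅ = e₁*f₁*c₇*c₇; that δ₁, δ₂ commute with each other and with all the other listed elements; e₁ commutes with f₁; c₁ commutes with each of c₃, c₄, c₅, c₆, c₇, e₁, f₁, x₁, x₂; e₁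 and f₁ each commute with x₂, c₅, c₇. Assume in addition: the lantern relation f₁*t*v = c₁*c₃*c₅*c₇; the identity c₅*x̄₂ = x₂*c₅; that c₁, c₃, c₅, c₇ pairwise commute; that c₃ commutes with t and v; that c₁ commutes with t and v; and that c₇ commutes with each of c₄, e₁, f₁, x₂. Set ȳ₁ = c₁*c₁*c₂*c₁⁻¹*c₁⁻¹, s₂ = c₅⁻¹*c₄*c₅, and r₃ = c₇⁻¹*c₆*c₇. Then (c₁*c₂)^2 * (c₄*e₁*c₄*f₁)⁻¹ * (c₇*c₆)^2 = ȳ₁*x₁*t*v*s₂*e₁*f₁*e₁*s₂*x̄₂*r₃. -/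
/-!
With `A = c₄ * e₁ * c₄ * f₁`, the braid relations give `(c₁ * c₂) ^ 2 = ȳ₁ * c₁ ^ 3` and
`(c₇ * c₆) ^ 2 = c₇ ^ 3 * r₃`, so it remains to rewrite `c₁ ^ 3 * A⁻¹ * c₇ ^ 3`. The chain relation
turns `A⁻¹` into `(δ₁ * δ₂)⁻¹ * A ^ 2`. The first and third lantern relations absorb `δ₁⁻¹ * c₁ ^ 3`
into `x₁ * t * v`, the second absorbs `δ₂⁻¹` and two of the factors `c₇` into `x̄₂`, and the
leftover factors `c₅` conjugate the two copies of `c₄` in `A ^ 2`.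
-/

theorem chain_sq_of_braid {M : Type*} [Monoid M] {c e : M} (f : M) (h : c * e * c = e * c * e) :
    (c * e * c * f) ^ 2 = e * (c * (e * f * e) * c * (e * f)) := by
  simp only [h, sq, mul_assoc]

theorem mul_mul_eq_mul_of_lanterns {S : Type*} [Semigroup S] [IsRightCancelMul S]
    {δ x c f u p q : S} (h₁ : δ * x * c = p * f) (h₂ : f * u = q * c) (hcu : Commute c u) :
    δ * (x * u) = p * q :=
  mul_right_cancel (b := c) <|
    calc δ * (x * u) * c = δ * x * (u * c) := by simp only [mul_assoc]
      _ = δ * x * c * u := by rw [← hcu.eq, mul_assoc (δ * x)]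
      _ = p * (f * u) := by rw [h₁, mul_assoc]
      _ = p * q * c := by rw [h₂, mul_assoc]

section

variable {G : Type*} [Group G]

theorem mul_sq_eq_conj_mul_cube_of_braid {a b : G} (h : a * b * a = b * a * b) :
    (a * b) ^ 2 = a * a * b * a⁻¹ * a⁻¹ * a ^ 3 :=
  calc (a * b) ^ 2 = a * (b * a * b) := by simp only [sq, mul_assoc]
    _ = a * (a * b * a) := by rw [h]
    _ = a * a * b * a⁻¹ * a⁻¹ * a ^ 3 := by
      simp only [pow_three, mul_assoc, inv_mul_cancel_left]

theorem mul_sq_eq_cube_mul_conj_of_braid {a b : G} (h : a * b * a = b * a * b) :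
    (a * b) ^ 2 = a ^ 3 * (a⁻¹ * b * a) :=
  calc (a * b) ^ 2 = a * (b * a * b) := by simp only [sq, mul_assoc]
    _ = a * (a * b * a) := by rw [h]
    _ = a ^ 3 * (a⁻¹ * b * a) := by simp only [pow_three, mul_assoc, mul_inv_cancel_left]

theorem mul_conj_mul_mul_conj_of_commute {s m : G} (c : G) (h : Commute s m) :
    s * ((s⁻¹ * c * s) * m * (s⁻¹ * c * s)) = c * m * c * s :=
  calc s * ((s⁻¹ * c * s) * m * (s⁻¹ * c * s)) = c * (s * m) * s⁻¹ * c * s := by group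
    _ = c * m * c * s := by rw [h.eq]; group

theorem mul_chain_inv_mul_cube {p c d e f s y z δ₁ δ₂ : G}
    (hce : c * e * c = e * c * e)
    (hchain : (c * e * c * f) ^ 3 = δ₁ * δ₂)
    (hy : δ₁ * y = p * e * d * s)
    (hz : δ₂ * (s * z) = e * f * d ^ 2)
    (hδ : Commute δ₁ δ₂) (hδ₁p : Commute δ₁ p)
    (hδ₂p : Commute δ₂ p) (hδ₂c : Commute δ₂ c) (hδ₂d : Commute δ₂ d)
    (hδ₂e : Commute δ₂ e) (hδ₂f : Commute δ₂ f)
    (hse : Commute s e) (hsf : Commute s f)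
    (hdc : Commute d c) (hde : Commute d e) (hdf : Commute d f) :
    p * (c * e * c * f)⁻¹ * d ^ 3 =
      y * ((s⁻¹ * c * s) * (e * f * e) * (s⁻¹ * c * s)) * z := by
  have hs : Commute s (e * f * e) := (hse.mul_right hsf).mul_right hse
  have hd : Commute d (c * (e * f * e) * c * (e * f)) :=
    ((hdc.mul_right ((hde.mul_right hdf).mul_right hde)).mul_right hdc).mul_right
      (hde.mul_right hdf)
  have hδ₂ : Commute δ₂ (p * e * d * (c * (e * f * e) * c)) :=
    ((hδ₂p.mul_right hδ₂e).mul_right hδ₂d).mul_right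
      ((hδ₂c.mul_right ((hδ₂e.mul_right hδ₂f).mul_right hδ₂e)).mul_right hδ₂c)
  refine mul_left_cancel (a := δ₁ * δ₂) ?_
  calc δ₁ * δ₂ * (p * (c * e * c * f)⁻¹ * d ^ 3)
      = p * (δ₁ * δ₂) * (c * e * c * f)⁻¹ * d ^ 3 := by
        rw [← (hδ₁p.mul_left hδ₂p).eq]; simp only [mul_assoc]
    _ = p * (c * e * c * f) ^ 2 * d ^ 3 := by
        rw [← hchain, pow_succ _ 2, ← mul_assoc p, mul_inv_cancel_right]
    _ = p * e * (c * (e * f * e) * c * (e * f) * d) * d ^ 2 := by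
        rw [chain_sq_of_braid f hce, pow_succ' d 2]; simp only [mul_assoc]
    _ = p * e * d * (c * (e * f * e) * c) * (e * f * d ^ 2) := by
        rw [← hd.eq]; simp only [mul_assoc]
    _ = p * e * d * (c * (e * f * e) * c) * δ₂ * (s * z) := by
        rw [← hz, mul_assoc _ δ₂]
    _ = δ₂ * (p * e * d) * (c * (e * f * e) * c * s) * z := by
        rw [← hδ₂.eq]; simp only [mul_assoc]
    _ = δ₂ * (p * e * d * s) * ((s⁻¹ * c * s) * (e * f * e) * (s⁻¹ * c * s)) * z := by
        rw [← mul_conj_mul_mul_conj_of_commute c hs]; simp only [mul_assoc]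
    _ = δ₁ * δ₂ * (y * ((s⁻¹ * c * s) * (e * f * e) * (s⁻¹ * c * s)) * z) := by
        rw [← hy, hδ.eq]; simp only [mul_assoc]

theorem genus_three_alternate_general {c₁ c₂ c₃ c₄ c₅ c₆ c₇ e₁ f₁ x₁ x₂ xb₂ δ₁ δ₂ t v : G}
    (hb₁ : c₁ * c₂ * c₁ = c₂ * c₁ * c₂)
    (hb₂ : c₄ * e₁ * c₄ = e₁ * c₄ * e₁)
    (hb₄ : c₆ * c₇ * c₆ = c₇ * c₆ * c₇)
    (hchain : (c₄ * e₁ * c₄ * f₁) ^ 3 = δ₁ * δ₂)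
    (hlantern₁ : δ₁ * x₁ * c₃ = c₁ * c₁ * e₁ * f₁)
    (hlantern₂ : δ₂ * x₂ * c₅ = e₁ * f₁ * c₇ * c₇)
    (hlantern₃ : f₁ * t * v = c₁ * c₃ * c₅ * c₇)
    (hx₂ : c₅ * xb₂ = x₂ * c₅)
    (hδ : Commute δ₁ δ₂) (hδ₁c₁ : Commute δ₁ c₁)
    (hδ₂c₁ : Commute δ₂ c₁) (hδ₂c₄ : Commute δ₂ c₄) (hδ₂c₇ : Commute δ₂ c₇)
    (hδ₂e₁ : Commute δ₂ e₁) (hδ₂f₁ : Commute δ₂ f₁)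
    (hc₁e₁ : Commute c₁ e₁) (he₁c₅ : Commute e₁ c₅) (hf₁c₅ : Commute f₁ c₅)
    (hc₃c₅ : Commute c₃ c₅) (hc₃c₇ : Commute c₃ c₇) (hc₅c₇ : Commute c₅ c₇)
    (hc₃t : Commute c₃ t) (hc₃v : Commute c₃ v)
    (hc₇c₄ : Commute c₇ c₄) (hc₇e₁ : Commute c₇ e₁) (hc₇f₁ : Commute c₇ f₁) :
    (c₁ * c₂) ^ 2 * (c₄ * e₁ * c₄ * f₁)⁻¹ * (c₇ * c₆) ^ 2 =
      (c₁ * c₁ * c₂ * c₁⁻¹ * c₁⁻¹) * x₁ * t * v * (c₅⁻¹ * c₄ * c₅) * e₁ * f₁ * e₁ *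
        (c₅⁻¹ * c₄ * c₅) * xb₂ * (c₇⁻¹ * c₆ * c₇) := by
  have lantern₃' : f₁ * (t * v) = c₁ * (c₇ * c₅) * c₃ := by
    rw [← mul_assoc, hlantern₃, mul_assoc _ c₅, hc₅c₇.eq, mul_assoc c₁,
      (hc₃c₇.mul_right hc₃c₅).eq, mul_assoc c₁]
  have x₁_tv : δ₁ * (x₁ * (t * v)) = c₁ ^ 3 * e₁ * c₇ * c₅ :=
    calc δ₁ * (x₁ * (t * v)) = c₁ * c₁ * e₁ * (c₁ * (c₇ * c₅)) :=
          mul_mul_eq_mul_of_lanterns hlantern₁ lantern₃' (hc₃t.mul_right hc₃v)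
      _ = c₁ * c₁ * (c₁ * e₁) * (c₇ * c₅) := by rw [hc₁e₁.eq]; simp only [mul_assoc]
      _ = c₁ ^ 3 * e₁ * c₇ * c₅ := by simp only [pow_three, mul_assoc]
  have c₅_xb₂ : δ₂ * (c₅ * xb₂) = e₁ * f₁ * c₇ ^ 2 := by
    rw [hx₂, ← mul_assoc, hlantern₂, mul_assoc _ c₇, sq]
  have core := mul_chain_inv_mul_cube hb₂ hchain x₁_tv c₅_xb₂ hδ (hδ₁c₁.pow_right 3)
    (hδ₂c₁.pow_right 3) hδ₂c₄ hδ₂c₇ hδ₂e₁ hδ₂f₁ he₁c₅.symm hf₁c₅.symm hc₇c₄ hc₇e₁ hc₇f₁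
  calc (c₁ * c₂) ^ 2 * (c₄ * e₁ * c₄ * f₁)⁻¹ * (c₇ * c₆) ^ 2
      = (c₁ * c₁ * c₂ * c₁⁻¹ * c₁⁻¹) * (c₁ ^ 3 * (c₄ * e₁ * c₄ * f₁)⁻¹ * c₇ ^ 3) *
          (c₇⁻¹ * c₆ * c₇) := by
        rw [mul_sq_eq_conj_mul_cube_of_braid hb₁, mul_sq_eq_cube_mul_conj_of_braid hb₄.symm]
        simp only [mul_assoc]
    _ = _ := by rw [core]; simp only [mul_assoc]

end

theorem genus_three_alternate {G : Type*} [Group G]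
    (c₁ c₂ c₃ c₄ c₅ c₆ c₇ e₁ f₁ x₁ x₂ xb₂ δ₁ δ₂ t v : G)
    (hb₁ : c₁ * c₂ * c₁ = c₂ * c₁ * c₂)
    (hb₂ : c₄ * e₁ * c₄ = e₁ * c₄ * e₁)
    (hb₃ : c₄ * f₁ * c₄ = f₁ * c₄ * f₁)
    (hb₄ : c₆ * c₇ * c₆ = c₇ * c₆ * c₇)
    (hchain : (c₄ * e₁ * c₄ * f₁) ^ 3 = δ₁ * δ₂)
    (hlantern₁ : δ₁ * x₁ * c₃ = c₁ * c₁ * e₁ * f₁)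
    (hlantern₂ : δ₂ * x₂ * c₅ = e₁ * f₁ * c₇ * c₇)
    (hδ : ∀ a ∈ [δ₁, δ₂],
      ∀ b ∈ [δ₁, δ₂, c₁, c₂, c₃, c₄, c₅, c₆, c₇, e₁, f₁, x₁, x₂, xb₂, t, v],
      a * b = b * a)
    (hef : e₁ * f₁ = f₁ * e₁)
    (hc₁ : ∀ b ∈ [c₃, c₄, c₅, c₆, c₇, e₁, f₁, x₁, x₂], c₁ * b = b * c₁)
    (hef' : ∀ a ∈ [e₁, f₁], ∀ b ∈ [x₂, c₅, c₇], a * b = b * a)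
    (hlantern₃ : f₁ * t * v = c₁ * c₃ * c₅ * c₇)
    (hx₂ : c₅ * xb₂ = x₂ * c₅)
    (hpair : List.Pairwise (fun a b => a * b = b * a) [c₁, c₃, c₅, c₇])
    (hc₃ : ∀ b ∈ [t, v], c₃ * b = b * c₃)
    (hc₁' : ∀ b ∈ [t, v], c₁ * b = b * c₁)
    (hc₇ : ∀ b ∈ [c₄, e₁, f₁, x₂], c₇ * b = b * c₇) :
    (c₁ * c₂) ^ 2 * (c₄ * e₁ * c₄ * f₁)⁻¹ * (c₇ * c₆) ^ 2 =
      (c₁ * c₁ * c₂ * c₁⁻¹ * c₁⁻¹) * x₁ * t * v * (c₅⁻¹ * c₄ * c₅) * e₁ * f₁ * e₁ *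
        (c₅⁻¹ * c₄ * c₅) * xb₂ * (c₇⁻¹ * c₆ * c₇) := by
  simp only [List.forall_mem_cons, List.pairwise_cons, ← commute_iff_eq]
    at hδ hc₁ hef' hpair hc₃ hc₇
  apply genus_three_alternate_general hb₁ hb₂ hb₄ hchain hlantern₁ hlantern₂ hlantern₃ hx₂ <;>
    tauto
end

section
/- Let G be a group and let c₁, …, c₉, e₁, f₁, e₂, f₂, x₁, x₂, x₃, x̄₃, δ₁, δ₂, δ₃, t, v ∈ G. Assume: the braid relations c₁*c₂*c₁ = c₂*c₁*c₂, c₄*e₁*c₄ = e₁*c₄*e₁, c₄*f₁*c₄ = f₁*c₄*f₁, c₆*e₂*c₆ = e₂*c₆*e₂, c₈*c₉*c₈ = c₉*c₈*c₉; the chain relations (c₄*e₁*c₄*f₁)^3 = δ₁*δ₂ and (c₉*c₈)^6 = δ₃; the lantern relations δ₁*x₁*c₃ = c₁*c₁*e₁*f₁, δ₂*x₂*c₅ = e₁*f₁*e₂*f₂, δ₃*x₃*c₇ = e₂*f₂*c₉*c₉, and f₂*t*v = f₁*c₅*c₇*c₉; the identity c₇*x̄₃ = x₃*c₇; that δ₁,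 δ₂, δ₃ commute with each other and with every other listed element; and the commutations: e₁ commutes with f₁; e₂ commutes with f₂; each of e₁, f₁ commutes with each of e₂, f₂, x₂, c₅; each of e₂, f₂ commutes with each of x₃, c₇, c₉; f₁, c₅, c₇, c₉ pairwise commute; f₁ commutes with each of x₂, t, v; t and v each commute with c₅; c₉ commutes with each of c₆, x₃, x̄₃; and c₁ commutes with each of c₃, c₄, c₅, c₆, c₇, c₈, c₉, e₁, f₁, x₁, x₂, t, v, x̄₃. Set y₂ = f₁⁻¹*c₄*e₁*c₄⁻¹*f₁ and s₃ = c₇⁻¹*c₆*c₇. Then (c₁*c₂)^2 * (c₄*e₁*c₄*f₁)⁻¹ * (c₆*e₂*c₆*f₂) * ((c₉*c₈)^2)⁻¹ = c₁*c₁*c₂*c₁⁻¹*x₁*c₃*y₂*y₂*c₄*x₂*t*v*s₃*x̄₃*c₈*c₉*c₉*c₈*c₈, and consequently the cube of the left-hand side equals c₁ * (c₁*c₂*x₁*c₃*y₂*y₂*c₄*x₂*t*v*s₃*x̄₃*c₈*c₉*c₉*c₈*c₈)^3 * c₁⁻¹. -/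
/-!
A twist can be cleared from a word in two ways. A chain relation `g ^ (n + 1) = δ` replaces `g⁻¹`
by the positive word `g ^ n` at the cost of one `δ⁻¹`, and a lantern relation `δ * w = p * q`, where
`δ` commutes with `p`, turns `p * δ⁻¹` into `w * q⁻¹`. The braid relations expose the `p` needed
next, so the lanterns clear in turn `δ₁⁻¹` and `δ₂⁻¹` from the first chain, then the `f₂⁻¹` left by
the second lantern, then `δ₃⁻¹` from the second chain. This leaves `(c₇ * c₉)⁻¹`, whose `c₉⁻¹`
cancels and whose `c₇⁻¹` is absorbed by `s₃ = c₇⁻¹ * c₆ * c₇`. The resulting word is positive up to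
a conjugation by `c₁`, which its cube turns into a conjugation of the whole word.
-/

section

variable {G : Type*} [Group G]

/-- The braid relation, satisfied by the Dehn twists about two curves meeting once. -/
def BraidRel (a b : G) : Prop :=
  a * b * a = b * a * b

namespace BraidRel

variable {a b : G}

theorem symm (h : BraidRel a b) : BraidRel b a :=
  Eq.symm h

theorem inv_mul_mul (h : BraidRel a b) : a⁻¹ * b * a = b * a * b⁻¹ :=
  calc a⁻¹ * b * a = a⁻¹ * (b * a * b) * b⁻¹ := by group
    _ = a⁻¹ * (a * b * a) * b⁻¹ := by rw [h.symm]
    _ = b * a * b⁻¹ := by group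

theorem mul_sq (h : BraidRel a b) : (a * b) ^ 2 = a * a * b * a⁻¹ * (a * a) :=
  calc (a * b) ^ 2 = a * (b * a * b) := by simp only [pow_two, mul_assoc]
    _ = a * (a * b * a) := by rw [h.symm]
    _ = a * a * b * a⁻¹ * (a * a) := by group

theorem mul_pow_four (h : BraidRel a b) :
    (a * b) ^ 4 = a * a * a * (b * a * a * b * b) :=
  calc (a * b) ^ 4 = a * (b * a * b) * (a * b * a) * b := by
        simp only [pow_succ, pow_zero, one_mul, mul_assoc]
    _ = a * (a * b * a) * (b * a * b) * b := by rw [h, h.symm]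
    _ = a * a * (b * a * b) * a * b * b := by simp only [mul_assoc]
    _ = a * a * (a * b * a) * a * b * b := by rw [h.symm]
    _ = a * a * a * (b * a * a * b * b) := by simp only [mul_assoc]

end BraidRel

theorem inv_eq_inv_mul_pow_of_pow_succ_eq {g d : G} {n : ℕ} (h : g ^ (n + 1) = d) :
    g⁻¹ = d⁻¹ * g ^ n := by
  rw [eq_inv_mul_iff_mul_eq, ← h, pow_succ, mul_inv_cancel_right]

theorem mul_inv_eq_mul_inv_of_mul_eq_mul {d p q w : G} (h : d * w = p * q) (hdp : Commute d p) :
    p * d⁻¹ = w * q⁻¹ := by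
  rw [← hdp.inv_left.eq, inv_mul_eq_iff_eq_mul, ← mul_assoc, h, mul_inv_cancel_right]

theorem mul_inv_eq_mul_inv_of_commute {d p q w : G} (h : d * w = p * q) (hpq : Commute p q)
    (hpw : Commute p w) : p * d⁻¹ = w * q⁻¹ := by
  have hd : d = p * q * w⁻¹ := eq_mul_inv_of_mul_eq h
  have hdp : Commute d p := by
    rw [hd]
    exact ((Commute.refl p).mul_left hpq.symm).mul_left hpw.symm.inv_left
  exact mul_inv_eq_mul_inv_of_mul_eq_mul h hdp

theorem conj_word_pow {a b w : G} (h : Commute a w) (n : ℕ) :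
    (a * a * b * a⁻¹ * w) ^ n = a * (a * b * w) ^ n * a⁻¹ := by
  rw [← conj_pow, mul_assoc _ a⁻¹, h.inv_left.eq]
  simp only [mul_assoc]

theorem threeChain_sq {c e f y : G} (hce : BraidRel c e) (hcf : BraidRel c f) (hef : Commute e f)
    (hy : y = f⁻¹ * c * e * c⁻¹ * f) :
    (c * e * c * f) ^ 2 = e * f * (y * y * c * f) * (e * f) :=
  calc (c * e * c * f) ^ 2 = c * e * c * f * (c * e * c) * f := by
        simp only [pow_two, mul_assoc]
    _ = e * c * e * f * (e * c * e) * f := by rw [hce]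
    _ = e * c * e * (f * e) * c * (e * f) := by simp only [mul_assoc]
    _ = e * c * e * (e * f) * c * (e * f) := by rw [hef.eq]
    _ = e * f * (f⁻¹ * c * e * e * (f * c * f⁻¹) * f) * (e * f) := by group
    _ = e * f * (f⁻¹ * c * e * e * (c⁻¹ * f * c) * f) * (e * f) := by rw [hcf.inv_mul_mul]
    _ = e * f * (y * y * c * f) * (e * f) := by
        rw [hy]
        group

theorem mul_threeChain_inv {c e f y d₁ d₂ p w : G}
    (hce : BraidRel c e) (hcf : BraidRel c f) (hef : Commute e f)
    (hy : y = f⁻¹ * c * e * c⁻¹ * f)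
    (hchain : (c * e * c * f) ^ 3 = d₁ * d₂) (hlantern : d₁ * w = p * (e * f))
    (hd : Commute d₁ d₂) (hd₁ : Commute d₁ p) (hd₂ : Commute d₂ (c * e * c * f)) :
    p * (c * e * c * f)⁻¹ = w * (y * y * c * f) * (e * f * d₂⁻¹) :=
  calc p * (c * e * c * f)⁻¹ = p * d₁⁻¹ * (d₂⁻¹ * (c * e * c * f) ^ 2) := by
        rw [inv_eq_inv_mul_pow_of_pow_succ_eq hchain, hd.mul_inv]
        simp only [mul_assoc]
    _ = w * (e * f)⁻¹ * ((c * e * c * f) ^ 2 * d₂⁻¹) := by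
        rw [mul_inv_eq_mul_inv_of_mul_eq_mul hlantern hd₁, (hd₂.pow_right 2).inv_left.eq]
    _ = w * (y * y * c * f) * (e * f * d₂⁻¹) := by
        rw [threeChain_sq hce hcf hef hy]
        group

theorem mul_twoChain_sq_inv {a b d p w : G} (hab : BraidRel a b)
    (hchain : (a * b) ^ 6 = d) (hlantern : d * w = p * (a * a)) (hd : Commute d p) :
    p * ((a * b) ^ 2)⁻¹ = w * a * (b * a * a * b * b) := by
  have hcube : ((a * b) ^ 2) ^ (2 + 1) = d := by rw [← pow_mul, hchain]
  rw [inv_eq_inv_mul_pow_of_pow_succ_eq hcube, ← pow_mul, hab.mul_pow_four, ← mul_assoc,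
    mul_inv_eq_mul_inv_of_mul_eq_mul hlantern hd]
  group

theorem inv_mul_threeChain {c e f : G} (hce : BraidRel c e) :
    (e * f)⁻¹ * (c * e * c * f) = f⁻¹ * c * (e * f) := by
  rw [hce]
  group

theorem inv_mul_mul_of_commute {a b u : G} (ha : Commute b a) (hu : Commute b u) :
    (a * b)⁻¹ * u * b = a⁻¹ * u := by
  rw [← ha.eq, mul_inv_rev, mul_assoc, ← hu.eq, ← mul_assoc, inv_mul_cancel_right]

theorem sq_mul_threeChain_inv_eq {c₁ c₂ c₃ c₄ c₅ e₁ f₁ g x₁ x₂ y₂ δ₁ δ₂ : G}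
    (hy₂ : y₂ = f₁⁻¹ * c₄ * e₁ * c₄⁻¹ * f₁)
    (hb₁ : BraidRel c₁ c₂) (hb₂ : BraidRel c₄ e₁) (hb₃ : BraidRel c₄ f₁)
    (hchain₁ : (c₄ * e₁ * c₄ * f₁) ^ 3 = δ₁ * δ₂)
    (hlantern₁ : δ₁ * x₁ * c₃ = c₁ * c₁ * e₁ * f₁)
    (hlantern₂ : δ₂ * x₂ * c₅ = e₁ * f₁ * g)
    (hδ₁ : ∀ b ∈ [δ₂, c₁], Commute δ₁ b) (hδ₂ : ∀ b ∈ [c₄, e₁, f₁], Commute δ₂ b)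
    (hef₁ : Commute e₁ f₁) :
    (c₁ * c₂) ^ 2 * (c₄ * e₁ * c₄ * f₁)⁻¹ =
      c₁ * c₁ * c₂ * c₁⁻¹ * (x₁ * c₃ * (y₂ * y₂ * c₄ * f₁) * (x₂ * c₅ * g⁻¹)) := by
  simp only [List.forall_mem_cons, List.not_mem_nil, IsEmpty.forall_iff, implies_true,
    and_true] at hδ₁ hδ₂
  obtain ⟨δ₁δ₂, δ₁c₁⟩ := hδ₁
  obtain ⟨δ₂c₄, δ₂e₁, δ₂f₁⟩ := hδ₂
  have clear_c₁ : c₁ * c₁ * (c₄ * e₁ * c₄ * f₁)⁻¹ =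
      x₁ * c₃ * (y₂ * y₂ * c₄ * f₁) * (e₁ * f₁ * δ₂⁻¹) :=
    mul_threeChain_inv hb₂ hb₃ hef₁ hy₂ hchain₁ (by simpa only [mul_assoc] using hlantern₁) δ₁δ₂
      (δ₁c₁.mul_right δ₁c₁) (((δ₂c₄.mul_right δ₂e₁).mul_right δ₂c₄).mul_right δ₂f₁)
  have clear_δ₂ : e₁ * f₁ * δ₂⁻¹ = x₂ * c₅ * g⁻¹ :=
    mul_inv_eq_mul_inv_of_mul_eq_mul (by simpa only [mul_assoc] using hlantern₂)
      (δ₂e₁.mul_right δ₂f₁)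
  rw [hb₁.mul_sq, mul_assoc _ (c₁ * c₁), clear_c₁, clear_δ₂]

theorem threeChain_mul_twoChain_inv_eq
    {c₅ c₆ c₇ c₈ c₉ e₂ f₁ f₂ s₃ t v x₂ x₃ xb₃ δ₃ : G}
    (hs₃ : s₃ = c₇⁻¹ * c₆ * c₇)
    (hb₄ : BraidRel c₆ e₂) (hb₅ : BraidRel c₈ c₉)
    (hchain₂ : (c₉ * c₈) ^ 6 = δ₃)
    (hlantern₃ : δ₃ * x₃ * c₇ = e₂ * f₂ * c₉ * c₉)
    (hlantern₄ : f₂ * t * v = f₁ * c₅ * c₇ * c₉)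
    (hx₃ : c₇ * xb₃ = x₃ * c₇)
    (hδ₃ : ∀ b ∈ [e₂, f₂], Commute δ₃ b)
    (hpair : List.Pairwise Commute [f₁, c₅, c₇, c₉])
    (hf₁ : ∀ b ∈ [x₂, t, v], Commute f₁ b)
    (htv : ∀ a ∈ [t, v], Commute a c₅)
    (hc₉ : ∀ b ∈ [c₆, xb₃], Commute c₉ b) :
    f₁ * (x₂ * c₅ * (e₂ * f₂)⁻¹) * (c₆ * e₂ * c₆ * f₂) * ((c₉ * c₈) ^ 2)⁻¹ =
      x₂ * t * v * s₃ * xb₃ * (c₈ * c₉ * c₉ * c₈ * c₈) := by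
  simp only [List.forall_mem_cons, List.not_mem_nil, IsEmpty.forall_iff, implies_true, and_true,
    List.pairwise_cons, List.Pairwise.nil] at hδ₃ hpair hf₁ htv hc₉
  obtain ⟨⟨-, f₁c₇, f₁c₉⟩, ⟨c₅c₇, c₅c₉⟩, c₇c₉⟩ := hpair
  obtain ⟨f₁x₂, f₁t, f₁v⟩ := hf₁
  obtain ⟨c₉c₆, c₉xb₃⟩ := hc₉
  have clear_f₂ : f₁ * c₅ * f₂⁻¹ = t * v * (c₇ * c₉)⁻¹ :=
    mul_inv_eq_mul_inv_of_commute (by simpa only [mul_assoc] using hlantern₄)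
      ((f₁c₇.mul_right f₁c₉).mul_left (c₅c₇.mul_right c₅c₉))
      ((f₁t.mul_right f₁v).mul_left (htv.1.mul_left htv.2).symm)
  have clear_c₉c₈ : e₂ * f₂ * ((c₉ * c₈) ^ 2)⁻¹ =
      c₇ * xb₃ * c₉ * (c₈ * c₉ * c₉ * c₈ * c₈) :=
    mul_twoChain_sq_inv hb₅.symm hchain₂ (by simpa only [hx₃, mul_assoc] using hlantern₃)
      (hδ₃.1.mul_right hδ₃.2)
  have clear_c₉ : (c₇ * c₉)⁻¹ * (c₆ * (c₇ * xb₃)) * c₉ = s₃ * xb₃ := by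
    rw [inv_mul_mul_of_commute c₇c₉.symm (c₉c₆.mul_right (c₇c₉.symm.mul_right c₉xb₃)), hs₃]
    simp only [mul_assoc]
  calc f₁ * (x₂ * c₅ * (e₂ * f₂)⁻¹) * (c₆ * e₂ * c₆ * f₂) * ((c₉ * c₈) ^ 2)⁻¹
      = x₂ * f₁ * c₅ * ((e₂ * f₂)⁻¹ * (c₆ * e₂ * c₆ * f₂)) * ((c₉ * c₈) ^ 2)⁻¹ := by
        rw [← f₁x₂.eq]
        simp only [mul_assoc]
    _ = x₂ * (f₁ * c₅ * f₂⁻¹) * c₆ * (e₂ * f₂ * ((c₉ * c₈) ^ 2)⁻¹) := by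
        rw [inv_mul_threeChain hb₄]
        simp only [mul_assoc]
    _ = x₂ * t * v * ((c₇ * c₉)⁻¹ * (c₆ * (c₇ * xb₃)) * c₉) * (c₈ * c₉ * c₉ * c₈ * c₈) := by
        rw [clear_f₂, clear_c₉c₈]
        simp only [mul_assoc]
    _ = x₂ * t * v * s₃ * xb₃ * (c₈ * c₉ * c₉ * c₈ * c₈) := by
        rw [clear_c₉]
        simp only [mul_assoc]

theorem genus_four_word_general
    {c₁ c₂ c₃ c₄ c₅ c₆ c₇ c₈ c₉ e₁ f₁ e₂ f₂ x₁ x₂ x₃ xb₃ y₂ s₃ δ₁ δ₂ δ₃ t v : G}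
    (hy₂ : y₂ = f₁⁻¹ * c₄ * e₁ * c₄⁻¹ * f₁)
    (hs₃ : s₃ = c₇⁻¹ * c₆ * c₇)
    (hb₁ : BraidRel c₁ c₂) (hb₂ : BraidRel c₄ e₁) (hb₃ : BraidRel c₄ f₁)
    (hb₄ : BraidRel c₆ e₂) (hb₅ : BraidRel c₈ c₉)
    (hchain₁ : (c₄ * e₁ * c₄ * f₁) ^ 3 = δ₁ * δ₂)
    (hchain₂ : (c₉ * c₈) ^ 6 = δ₃)
    (hlantern₁ : δ₁ * x₁ * c₃ = c₁ * c₁ * e₁ * f₁)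
    (hlantern₂ : δ₂ * x₂ * c₅ = e₁ * f₁ * e₂ * f₂)
    (hlantern₃ : δ₃ * x₃ * c₇ = e₂ * f₂ * c₉ * c₉)
    (hlantern₄ : f₂ * t * v = f₁ * c₅ * c₇ * c₉)
    (hx₃ : c₇ * xb₃ = x₃ * c₇)
    (hδ₁ : ∀ b ∈ [δ₂, c₁], Commute δ₁ b)
    (hδ₂ : ∀ b ∈ [c₄, e₁, f₁], Commute δ₂ b)
    (hδ₃ : ∀ b ∈ [e₂, f₂], Commute δ₃ b)
    (hef₁ : Commute e₁ f₁)
    (hpair : List.Pairwise Commute [f₁, c₅, c₇, c₉])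
    (hf₁ : ∀ b ∈ [x₂, t, v], Commute f₁ b)
    (htv : ∀ a ∈ [t, v], Commute a c₅)
    (hc₉ : ∀ b ∈ [c₆, xb₃], Commute c₉ b)
    (hc₁ : ∀ b ∈ [c₃, c₄, c₆, c₇, c₈, c₉, e₁, f₁, x₁, x₂, t, v, xb₃], Commute c₁ b) :
    (c₁ * c₂) ^ 2 * (c₄ * e₁ * c₄ * f₁)⁻¹ * (c₆ * e₂ * c₆ * f₂) * ((c₉ * c₈) ^ 2)⁻¹ =
        c₁ * c₁ * c₂ * c₁⁻¹ * x₁ * c₃ * y₂ * y₂ * c₄ * x₂ * t * v * s₃ * xb₃ *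
          c₈ * c₉ * c₉ * c₈ * c₈ ∧
    ((c₁ * c₂) ^ 2 * (c₄ * e₁ * c₄ * f₁)⁻¹ * (c₆ * e₂ * c₆ * f₂) * ((c₉ * c₈) ^ 2)⁻¹) ^ 3 =
        c₁ * (c₁ * c₂ * x₁ * c₃ * y₂ * y₂ * c₄ * x₂ * t * v * s₃ * xb₃ *
          c₈ * c₉ * c₉ * c₈ * c₈) ^ 3 * c₁⁻¹ := by
  have word : (c₁ * c₂) ^ 2 * (c₄ * e₁ * c₄ * f₁)⁻¹ * (c₆ * e₂ * c₆ * f₂) * ((c₉ * c₈) ^ 2)⁻¹ =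
      c₁ * c₁ * c₂ * c₁⁻¹ * (x₁ * c₃ * y₂ * y₂ * c₄ * x₂ * t * v * s₃ * xb₃ *
        c₈ * c₉ * c₉ * c₈ * c₈) :=
    calc _ = c₁ * c₁ * c₂ * c₁⁻¹ * (x₁ * c₃ * y₂ * y₂ * c₄ *
          (f₁ * (x₂ * c₅ * (e₂ * f₂)⁻¹) * (c₆ * e₂ * c₆ * f₂) * ((c₉ * c₈) ^ 2)⁻¹)) := by
          rw [sq_mul_threeChain_inv_eq hy₂ hb₁ hb₂ hb₃ hchain₁ hlantern₁
            (by simpa only [mul_assoc] using hlantern₂) hδ₁ hδ₂ hef₁]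
          simp only [mul_assoc]
      _ = _ := by
          rw [threeChain_mul_twoChain_inv_eq hs₃ hb₄ hb₅ hchain₂ hlantern₃ hlantern₄ hx₃ hδ₃
            hpair hf₁ htv hc₉]
          simp only [mul_assoc]
  have comm : Commute c₁ (x₁ * c₃ * y₂ * y₂ * c₄ * x₂ * t * v * s₃ * xb₃ *
      c₈ * c₉ * c₉ * c₈ * c₈) := by
    simp only [List.forall_mem_cons, List.not_mem_nil, IsEmpty.forall_iff, implies_true,
      and_true] at hc₁
    obtain ⟨c₁c₃, c₁c₄, c₁c₆, c₁c₇, c₁c₈, c₁c₉, c₁e₁, c₁f₁, c₁x₁, c₁x₂, c₁t, c₁v, c₁xb₃⟩ := hc₁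
    rw [hy₂, hs₃]
    repeat' first | assumption | apply Commute.mul_right | apply Commute.inv_right
  rw [word, conj_word_pow comm]
  simp only [mul_assoc, and_self]

end

theorem genus_four_word {G : Type*} [Group G]
    (c₁ c₂ c₃ c₄ c₅ c₆ c₇ c₈ c₉ e₁ f₁ e₂ f₂ x₁ x₂ x₃ xb₃ δ₁ δ₂ δ₃ t v : G)
    (hb₁ : c₁ * c₂ * c₁ = c₂ * c₁ * c₂)
    (hb₂ : c₄ * e₁ * c₄ = e₁ * c₄ * e₁)
    (hb₃ : c₄ * f₁ * c₄ = f₁ * c₄ * f₁)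
    (hb₄ : c₆ * e₂ * c₆ = e₂ * c₆ * e₂)
    (hb₅ : c₈ * c₉ * c₈ = c₉ * c₈ * c₉)
    (hchain₁ : (c₄ * e₁ * c₄ * f₁) ^ 3 = δ₁ * δ₂)
    (hchain₂ : (c₉ * c₈) ^ 6 = δ₃)
    (hlantern₁ : δ₁ * x₁ * c₃ = c₁ * c₁ * e₁ * f₁)
    (hlantern₂ : δ₂ * x₂ * c₅ = e₁ * f₁ * e₂ * f₂)
    (hlantern₃ : δ₃ * x₃ * c₇ = e₂ * f₂ * c₉ * c₉)
    (hlantern₄ : f₂ * t * v = f₁ * c₅ * c₇ * c₉)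
    (hx₃ : c₇ * xb₃ = x₃ * c₇)
    (hδ : ∀ a ∈ [δ₁, δ₂, δ₃],
      ∀ b ∈ [δ₁, δ₂, δ₃, c₁, c₂, c₃, c₄, c₅, c₆, c₇, c₈, c₉, e₁, f₁, e₂, f₂,
        x₁, x₂, x₃, xb₃, t, v], a * b = b * a)
    (hef₁ : e₁ * f₁ = f₁ * e₁)
    (hef₂ : e₂ * f₂ = f₂ * e₂)
    (h₁₂ : ∀ a ∈ [e₁, f₁], ∀ b ∈ [e₂, f₂, x₂, c₅], a * b = b * a)
    (h₂₃ : ∀ a ∈ [e₂, f₂], ∀ b ∈ [x₃, c₇, c₉], a * b = b * a)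
    (hpair : List.Pairwise (fun a b => a * b = b * a) [f₁, c₅, c₇, c₉])
    (hf₁ : ∀ b ∈ [x₂, t, v], f₁ * b = b * f₁)
    (htv : ∀ a ∈ [t, v], a * c₅ = c₅ * a)
    (hc₉ : ∀ b ∈ [c₆, x₃, xb₃], c₉ * b = b * c₉)
    (hc₁ : ∀ b ∈ [c₃, c₄, c₅, c₆, c₇, c₈, c₉, e₁, f₁, x₁, x₂, t, v, xb₃],
      c₁ * b = b * c₁) :
    (c₁ * c₂) ^ 2 * (c₄ * e₁ * c₄ * f₁)⁻¹ * (c₆ * e₂ * c₆ * f₂) * ((c₉ * c₈) ^ 2)⁻¹ =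
        c₁ * c₁ * c₂ * c₁⁻¹ * x₁ * c₃ * (f₁⁻¹ * c₄ * e₁ * c₄⁻¹ * f₁) *
          (f₁⁻¹ * c₄ * e₁ * c₄⁻¹ * f₁) * c₄ * x₂ * t * v * (c₇⁻¹ * c₆ * c₇) * xb₃ *
          c₈ * c₉ * c₉ * c₈ * c₈ ∧
    ((c₁ * c₂) ^ 2 * (c₄ * e₁ * c₄ * f₁)⁻¹ * (c₆ * e₂ * c₆ * f₂) * ((c₉ * c₈) ^ 2)⁻¹) ^ 3 =
        c₁ * (c₁ * c₂ * x₁ * c₃ * (f₁⁻¹ * c₄ * e₁ * c₄⁻¹ * f₁) *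
          (f₁⁻¹ * c₄ * e₁ * c₄⁻¹ * f₁) * c₄ * x₂ * t * v * (c₇⁻¹ * c₆ * c₇) * xb₃ *
          c₈ * c₉ * c₉ * c₈ * c₈) ^ 3 * c₁⁻¹ := by
  exact genus_four_word_general rfl rfl hb₁ hb₂ hb₃ hb₄ hb₅ hchain₁ hchain₂ hlantern₁ hlantern₂
    hlantern₃ hlantern₄ hx₃ (fun b _ => hδ δ₁ (by simp) b (by revert b; simp))
    (fun b _ => hδ δ₂ (by simp) b (by revert b; simp))
    (fun b _ => hδ δ₃ (by simp) b (by revert b; simp)) hef₁ hpair hf₁ htv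
    (fun b _ => hc₉ b (by revert b; simp)) (fun b _ => hc₁ b (by revert b; simp))
end

section
/- Let G be a group and let a₁, b₁, a₂, b₂, a₃, b₃, α₁, α₂, α₃, d, x₁, c₁, x₂, c₂, x₃, c₃, δ₁, δ₂, δ₃ ∈ G. Assume: the braid relations aᵢ*bᵢ*aᵢ = bᵢ*aᵢ*bᵢ for i = 1, 2, 3; the star relation (α₁*α₂*α₃*d)^3 = δ₁*δ₂*δ₃; the lantern relations δ₁*x₁*c₁ = a₁*a₁*α₁*α₂, δ₂*x₂*c₂ = a₂*a₂*α₂*α₃, δ₃*x₃*c₃ = a₃*a₃*α₃*α₁; that δ₁, δ₂, δ₃ commute with each other and with every other listed element; that α₁, α₂, α₃ pairwise commute and each commutes with each of x₁, c₁, x₂, c₂, x₃, c₃; and that each aᵢ commutes with a_j and b_j for j ≠ i, with each of x₁, c₁, x₂, c₂, x₃, c₃, and with each of α₁, α₂, α₃. Set r = (α₁*α₂*α₃)⁻¹ * d * (α₁*α₂*α₃). Then (b₁*a₁)^2 * (b₂*a₂)^2 * (b₃*a₃)^2 * (α₁*α₂*α₃*d)⁻¹ = a₁*b₁*a₂*b₂*a₃*b₃*x₁*c₁*x₂*c₂*x₃*c₃*r*d,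 and consequently its cube equals (a₁*b₁*a₂*b₂*a₃*b₃*x₁*c₁*x₂*c₂*x₃*c₃*r*d)^3. -/
/-!
The braid relation gives `(bᵢaᵢ)² = aᵢbᵢ · aᵢ²`, and the factors `aᵢ²` can be collected on the right
as `S = a₁²a₂²a₃²`. Multiplying the three lantern relations, each `αᵢ` occurs twice, so with
`p = α₁α₂α₃` and `δ = δ₁δ₂δ₃` we get `δ · x₁c₁x₂c₂x₃c₃ = S p²`. The star relation `(pd)³ = δ` then
trades `δ` for powers of `pd`: as `p² (p⁻¹dp) d = (pd)²`, we have
`δ · x₁c₁x₂c₂x₃c₃ (p⁻¹dp) d = S (pd)² = S δ (pd)⁻¹`, and `δ` cancels because it commutes with `S`.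
-/

section Semigroup

variable {S : Type*} [Semigroup S]

theorem mul_mul_mul_mul_mul_comm_of_commute {f₁ g₁ f₂ g₂ f₃ g₃ : S}
    (h₁₂ : Commute g₁ f₂) (h₁₃ : Commute g₁ f₃) (h₂₃ : Commute g₂ f₃) :
    f₁ * g₁ * (f₂ * g₂) * (f₃ * g₃) = f₁ * f₂ * f₃ * (g₁ * g₂ * g₃) := by
  rw [h₁₂.mul_mul_mul_comm, (h₁₃.mul_left h₂₃).mul_mul_mul_comm]

end Semigroup

section Monoid

variable {M : Type*} [Monoid M]

theorem mul_sq_eq_of_braid {a b : M} (h : a * b * a = b * a * b) :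
    (b * a) ^ 2 = a * b * a ^ 2 := by
  rw [sq, ← mul_assoc, ← h, sq, ← mul_assoc]

theorem prod_mul_sq_eq_of_braid {a₁ b₁ a₂ b₂ a₃ b₃ : M}
    (hbr₁ : a₁ * b₁ * a₁ = b₁ * a₁ * b₁) (hbr₂ : a₂ * b₂ * a₂ = b₂ * a₂ * b₂)
    (hbr₃ : a₃ * b₃ * a₃ = b₃ * a₃ * b₃)
    (ha₁₂ : Commute a₁ a₂) (ha₁₃ : Commute a₁ a₃) (ha₂₃ : Commute a₂ a₃)
    (hab₁₂ : Commute a₁ b₂) (hab₁₃ : Commute a₁ b₃) (hab₂₃ : Commute a₂ b₃) :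
    (b₁ * a₁) ^ 2 * (b₂ * a₂) ^ 2 * (b₃ * a₃) ^ 2 =
      a₁ * b₁ * (a₂ * b₂) * (a₃ * b₃) * (a₁ ^ 2 * a₂ ^ 2 * a₃ ^ 2) := by
  rw [mul_sq_eq_of_braid hbr₁, mul_sq_eq_of_braid hbr₂, mul_sq_eq_of_braid hbr₃]
  exact mul_mul_mul_mul_mul_comm_of_commute ((ha₁₂.mul_right hab₁₂).pow_left 2)
    ((ha₁₃.mul_right hab₁₃).pow_left 2) ((ha₂₃.mul_right hab₂₃).pow_left 2)

theorem cyclic_mul_eq_sq_of_commute {α₁ α₂ α₃ : M}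
    (h₁₂ : Commute α₁ α₂) (h₁₃ : Commute α₁ α₃) (h₂₃ : Commute α₂ α₃) :
    α₁ * α₂ * (α₂ * α₃) * (α₃ * α₁) = (α₁ * α₂ * α₃) ^ 2 := by
  have hswap : Commute (α₂ * α₃) (α₃ * α₁) :=
    (h₂₃.mul_right h₁₂.symm).mul_left ((Commute.refl α₃).mul_right h₁₃.symm)
  rw [mul_assoc, hswap.eq, sq]
  simp only [mul_assoc]

theorem prod_mul_prod_eq_of_lantern {δ₁ δ₂ δ₃ y₁ y₂ y₃ s₁ s₂ s₃ α₁ α₂ α₃ : M}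
    (hlantern₁ : δ₁ * y₁ = s₁ * (α₁ * α₂)) (hlantern₂ : δ₂ * y₂ = s₂ * (α₂ * α₃))
    (hlantern₃ : δ₃ * y₃ = s₃ * (α₃ * α₁))
    (hδ₂y₁ : Commute δ₂ y₁) (hδ₃y₁ : Commute δ₃ y₁) (hδ₃y₂ : Commute δ₃ y₂)
    (hα₁₂ : Commute α₁ α₂) (hα₁₃ : Commute α₁ α₃) (hα₂₃ : Commute α₂ α₃)
    (hs₂α₁ : Commute s₂ α₁) (hs₂α₂ : Commute s₂ α₂)
    (hs₃α₁ : Commute s₃ α₁) (hs₃α₂ : Commute s₃ α₂) (hs₃α₃ : Commute s₃ α₃) :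
    δ₁ * δ₂ * δ₃ * (y₁ * y₂ * y₃) = s₁ * s₂ * s₃ * (α₁ * α₂ * α₃) ^ 2 :=
  calc δ₁ * δ₂ * δ₃ * (y₁ * y₂ * y₃)
      = δ₁ * y₁ * (δ₂ * y₂) * (δ₃ * y₃) :=
        (mul_mul_mul_mul_mul_comm_of_commute hδ₂y₁.symm hδ₃y₁.symm hδ₃y₂.symm).symm
    _ = s₁ * (α₁ * α₂) * (s₂ * (α₂ * α₃)) * (s₃ * (α₃ * α₁)) := by
        rw [hlantern₁, hlantern₂, hlantern₃]
    _ = s₁ * s₂ * s₃ * (α₁ * α₂ * (α₂ * α₃) * (α₃ * α₁)) :=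
        mul_mul_mul_mul_mul_comm_of_commute (hs₂α₁.mul_right hs₂α₂).symm
          (hs₃α₁.mul_right hs₃α₂).symm (hs₃α₂.mul_right hs₃α₃).symm
    _ = s₁ * s₂ * s₃ * (α₁ * α₂ * α₃) ^ 2 := by
        rw [cyclic_mul_eq_sq_of_commute hα₁₂ hα₁₃ hα₂₃]

end Monoid

section Group

variable {G : Type*} [Group G]

theorem sq_mul_conj_mul (p d : G) : p ^ 2 * (p⁻¹ * d * p) * d = (p * d) ^ 2 := by
  simp only [sq, mul_assoc, mul_inv_cancel_left]

theorem mul_inv_eq_mul_conj_mul_of_pow_three {p d s y : G}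
    (h : (p * d) ^ 3 * y = s * p ^ 2) (hs : Commute ((p * d) ^ 3) s) :
    s * (p * d)⁻¹ = y * (p⁻¹ * d * p) * d := by
  rw [mul_inv_eq_iff_eq_mul]
  apply mul_left_cancel (a := (p * d) ^ 3)
  calc (p * d) ^ 3 * s
      = s * (p * d) ^ 2 * (p * d) := by rw [hs.eq, pow_succ, mul_assoc]
    _ = s * p ^ 2 * (p⁻¹ * d * p) * d * (p * d) := by
        rw [← sq_mul_conj_mul]
        simp only [mul_assoc]
    _ = (p * d) ^ 3 * (y * (p⁻¹ * d * p) * d * (p * d)) := by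
        rw [← h]
        simp only [mul_assoc]

theorem genus_four_rose_general {a₁ b₁ a₂ b₂ a₃ b₃ α₁ α₂ α₃ d x₁ c₁ x₂ c₂ x₃ c₃ δ₁ δ₂ δ₃ : G}
    (hbr₁ : a₁ * b₁ * a₁ = b₁ * a₁ * b₁)
    (hbr₂ : a₂ * b₂ * a₂ = b₂ * a₂ * b₂)
    (hbr₃ : a₃ * b₃ * a₃ = b₃ * a₃ * b₃)
    (hstar : (α₁ * α₂ * α₃ * d) ^ 3 = δ₁ * δ₂ * δ₃)
    (hlantern₁ : δ₁ * x₁ * c₁ = a₁ * a₁ * α₁ * α₂)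
    (hlantern₂ : δ₂ * x₂ * c₂ = a₂ * a₂ * α₂ * α₃)
    (hlantern₃ : δ₃ * x₃ * c₃ = a₃ * a₃ * α₃ * α₁)
    (hδa : ∀ u ∈ [δ₁, δ₂, δ₃], ∀ w ∈ [a₁, a₂, a₃], Commute u w)
    (hδ₂ : ∀ w ∈ [x₁, c₁], Commute δ₂ w) (hδ₃ : ∀ w ∈ [x₁, c₁, x₂, c₂], Commute δ₃ w)
    (hα : List.Pairwise Commute [α₁, α₂, α₃])
    (ha₁₂ : Commute a₁ a₂) (ha₁₃ : Commute a₁ a₃) (ha₂₃ : Commute a₂ a₃)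
    (hab₁₂ : Commute a₁ b₂) (hab₁₃ : Commute a₁ b₃) (hab₂₃ : Commute a₂ b₃)
    (ha₂α : ∀ w ∈ [α₁, α₂], Commute a₂ w) (ha₃α : ∀ w ∈ [α₁, α₂, α₃], Commute a₃ w) :
    (b₁ * a₁) ^ 2 * (b₂ * a₂) ^ 2 * (b₃ * a₃) ^ 2 * (α₁ * α₂ * α₃ * d)⁻¹ =
      a₁ * b₁ * a₂ * b₂ * a₃ * b₃ * x₁ * c₁ * x₂ * c₂ * x₃ * c₃ *
        ((α₁ * α₂ * α₃)⁻¹ * d * (α₁ * α₂ * α₃)) * d := by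
  simp only [List.pairwise_cons, List.mem_cons, List.not_mem_nil, or_false, forall_eq_or_imp,
    forall_eq] at hδ₂ hδ₃ hα ha₂α ha₃α
  obtain ⟨hδ₃x₁, hδ₃c₁, hδ₃x₂, hδ₃c₂⟩ := hδ₃
  obtain ⟨⟨hα₁₂, hα₁₃⟩, hα₂₃, -⟩ := hα
  obtain ⟨ha₃α₁, ha₃α₂, ha₃α₃⟩ := ha₃α
  have hlanterns : δ₁ * δ₂ * δ₃ * (x₁ * c₁ * (x₂ * c₂) * (x₃ * c₃)) =
      a₁ ^ 2 * a₂ ^ 2 * a₃ ^ 2 * (α₁ * α₂ * α₃) ^ 2 :=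
    prod_mul_prod_eq_of_lantern (by simpa only [sq, mul_assoc] using hlantern₁)
      (by simpa only [sq, mul_assoc] using hlantern₂)
      (by simpa only [sq, mul_assoc] using hlantern₃)
      (hδ₂.1.mul_right hδ₂.2) (hδ₃x₁.mul_right hδ₃c₁) (hδ₃x₂.mul_right hδ₃c₂)
      hα₁₂ hα₁₃ hα₂₃ (ha₂α.1.pow_left 2) (ha₂α.2.pow_left 2)
      (ha₃α₁.pow_left 2) (ha₃α₂.pow_left 2) (ha₃α₃.pow_left 2)
  have hδprod : ∀ w ∈ [a₁, a₂, a₃], Commute (δ₁ * δ₂ * δ₃) w := fun w hw =>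
    ((hδa δ₁ (by simp) w hw).mul_left (hδa δ₂ (by simp) w hw)).mul_left (hδa δ₃ (by simp) w hw)
  have hδsq : Commute (δ₁ * δ₂ * δ₃) (a₁ ^ 2 * a₂ ^ 2 * a₃ ^ 2) :=
    (((hδprod a₁ (by simp)).pow_right 2).mul_right ((hδprod a₂ (by simp)).pow_right 2)).mul_right
      ((hδprod a₃ (by simp)).pow_right 2)
  rw [← hstar] at hlanterns hδsq
  rw [prod_mul_sq_eq_of_braid hbr₁ hbr₂ hbr₃ ha₁₂ ha₁₃ ha₂₃ hab₁₂ hab₁₃ hab₂₃, mul_assoc,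
    mul_inv_eq_mul_conj_mul_of_pow_three hlanterns hδsq]
  simp only [mul_assoc]

end Group

theorem genus_four_rose {G : Type*} [Group G]
    (a₁ b₁ a₂ b₂ a₃ b₃ α₁ α₂ α₃ d x₁ c₁ x₂ c₂ x₃ c₃ δ₁ δ₂ δ₃ : G)
    (hbr₁ : a₁ * b₁ * a₁ = b₁ * a₁ * b₁)
    (hbr₂ : a₂ * b₂ * a₂ = b₂ * a₂ * b₂)
    (hbr₃ : a₃ * b₃ * a₃ = b₃ * a₃ * b₃)
    (hstar : (α₁ * α₂ * α₃ * d) ^ 3 = δ₁ * δ₂ * δ₃)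
    (hlantern₁ : δ₁ * x₁ * c₁ = a₁ * a₁ * α₁ * α₂)
    (hlantern₂ : δ₂ * x₂ * c₂ = a₂ * a₂ * α₂ * α₃)
    (hlantern₃ : δ₃ * x₃ * c₃ = a₃ * a₃ * α₃ * α₁)
    (hδ : ∀ u ∈ [δ₁, δ₂, δ₃],
      ∀ w ∈ [δ₁, δ₂, δ₃, a₁, b₁, a₂, b₂, a₃, b₃, α₁, α₂, α₃, d, x₁, c₁, x₂, c₂, x₃, c₃],
      u * w = w * u)
    (hα : List.Pairwise (fun u w => u * w = w * u) [α₁, α₂, α₃])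
    (hαxc : ∀ u ∈ [α₁, α₂, α₃], ∀ w ∈ [x₁, c₁, x₂, c₂, x₃, c₃], u * w = w * u)
    (ha₁₂ : a₁ * a₂ = a₂ * a₁) (ha₁₃ : a₁ * a₃ = a₃ * a₁) (ha₂₃ : a₂ * a₃ = a₃ * a₂)
    (hab₁₂ : a₁ * b₂ = b₂ * a₁) (hab₁₃ : a₁ * b₃ = b₃ * a₁)
    (hab₂₁ : a₂ * b₁ = b₁ * a₂) (hab₂₃ : a₂ * b₃ = b₃ * a₂)
    (hab₃₁ : a₃ * b₁ = b₁ * a₃) (hab₃₂ : a₃ * b₂ = b₂ * a₃)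
    (haxc : ∀ u ∈ [a₁, a₂, a₃], ∀ w ∈ [x₁, c₁, x₂, c₂, x₃, c₃], u * w = w * u)
    (haα : ∀ u ∈ [a₁, a₂, a₃], ∀ w ∈ [α₁, α₂, α₃], u * w = w * u) :
    (b₁ * a₁) ^ 2 * (b₂ * a₂) ^ 2 * (b₃ * a₃) ^ 2 * (α₁ * α₂ * α₃ * d)⁻¹ =
        a₁ * b₁ * a₂ * b₂ * a₃ * b₃ * x₁ * c₁ * x₂ * c₂ * x₃ * c₃ *
          ((α₁ * α₂ * α₃)⁻¹ * d * (α₁ * α₂ * α₃)) * d ∧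
    ((b₁ * a₁) ^ 2 * (b₂ * a₂) ^ 2 * (b₃ * a₃) ^ 2 * (α₁ * α₂ * α₃ * d)⁻¹) ^ 3 =
        (a₁ * b₁ * a₂ * b₂ * a₃ * b₃ * x₁ * c₁ * x₂ * c₂ * x₃ * c₃ *
          ((α₁ * α₂ * α₃)⁻¹ * d * (α₁ * α₂ * α₃)) * d) ^ 3 := by
  simp only [List.mem_cons, List.not_mem_nil, or_false, forall_eq_or_imp, forall_eq] at hδ haα
  have h := genus_four_rose_general hbr₁ hbr₂ hbr₃ hstar hlantern₁ hlantern₂ hlantern₃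
    (by simp [commute_iff_eq, hδ]) (by simp [commute_iff_eq, hδ])
    (by simp [commute_iff_eq, hδ]) hα ha₁₂ ha₁₃ ha₂₃ hab₁₂ hab₁₃ hab₂₃
    (by simp [commute_iff_eq, haα]) (by simp [commute_iff_eq, haα])
  exact ⟨h, congrArg (· ^ 3) h⟩
end

section
/- Let G be a group and let c₁, …, c₁₁, e₁, f₁, e₂, f₂, e₃, f₃, x₁, x₂, x₃, x̄₃, x₄, δ₁, δ₂, δ₃, δ₄, t, v ∈ G. Assume: the braid relations c₁*c₂*c₁ = c₂*c₁*c₂, c₄*e₁*c₄ = e₁*c₄*e₁, c₄*f₁*c₄ = f₁*c₄*f₁, c₆*e₂*c₆ = e₂*c₆*e₂, c₈*e₃*c₈ = e₃*c₈*e₃, c₈*f₃*c₈ = f₃*c₈*f₃, c₁₀*c₁₁*c₁₀ = c₁₁*c₁₀*c₁₁; the chain relations (c₄*e₁*c₄*f₁)^3 = δ₁*δ₂ and (c₈*e₃*c₈*f₃)^3 = δ₃*δ₄; the lantern relations δ₁*x₁*c₃ = c₁*c₁*e₁*f₁, δ₂*x₂*c₅ = e₁*f₁*e₂*f₂, δ₃*x₃*c₇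 = e₂*f₂*e₃*f₃, δ₄*x₄*c₉ = e₃*f₃*c₁₁*c₁₁, and f₂*t*v = f₁*c₅*c₇*f₃; the identity c₇*x̄₃ = x₃*c₇; that δ₁, δ₂, δ₃, δ₄ commute with each other and with every other listed element; and the commutations: eᵢ commutes with fᵢ for i = 1, 2, 3; each of e₁, f₁ commutes with each of e₂, f₂, x₂, c₅; each of e₂, f₂ commutes with each of e₃, f₃, x₃, c₇; each of e₃, f₃ commutes with each of x₄, c₉, c₁₁; f₁, c₅, c₇, f₃ pairwise commute; f₁ commutes with x₂, t, v; t and v each commute with c₅; f₃ commutes with c₆ and x₃; c₁ commutes with each of c₃, c₄, c₅, c₆, c₇, c₈, c₉, c₁₀, c₁₁, e₁, f₁, e₃, f₃, x₁, x₂, x₄, t, v, x̄₃. Set y₂ = f₁⁻¹*c₄*e₁*c₄⁻¹*f₁, s₃ = c₇⁻¹*c₆*c₇, r₃ = f₃⁻¹*c₈*f₃, r̄₃ = c₈⁻¹*e₃*c₈. Then (c₁*c₂)^2 * (c₄*e₁*c₄*f₁)⁻¹ * (c₆*e₂*c₆*f₂) * (c₈*e₃*c₈*f₃)⁻¹ *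 (c₁₁*c₁₀)^2 = c₁*c₁*c₂*c₁⁻¹*x₁*c₃*y₂*y₂*c₄*x₂*t*v*s₃*x̄₃*r₃*r̄₃*r̄₃*x₄*c₉*c₁₀*c₁₁, and consequently the cube of the left-hand side equals c₁ * (c₁*c₂*x₁*c₃*y₂*y₂*c₄*x₂*t*v*s₃*x̄₃*r₃*r̄₃*r̄₃*x₄*c₉*c₁₀*c₁₁)^3 * c₁⁻¹. -/
/-!
Each chain relation gives `(c * e * c * f)⁻¹ = δ⁻¹ * (c * e * c * f) ^ 2 * δ'⁻¹`, and the braid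
relations turn the square into a positive word in conjugates, flanked on both sides by words in `e`
and `f`. These flanking words, together with the neighbouring factors, form one side of a lantern
relation, so each of the four inverse boundary twists is absorbed by a lantern. The two inner
lanterns leave a factor `f₂⁻¹`, which the fifth lantern removes. As `c₁` commutes with every later
letter, the one inverse letter `c₁⁻¹` outside the conjugates then moves to the end of the word,
which becomes a conjugate of a positive one.
-/

section ChainsAndLanterns

variable {G : Type*} [Group G]

theorem mul_mul_inv_eq_of_braid {a b : G} (hab : a * b * a = b * a * b) :
    a * b * a⁻¹ = b⁻¹ * a * b := by
  rw [mul_inv_eq_iff_eq_mul, mul_assoc, mul_assoc, eq_inv_mul_iff_mul_eq]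
  simpa only [mul_assoc] using hab.symm

theorem chain_sq_eq_left {c e f : G} (hce : c * e * c = e * c * e)
    (hcf : c * f * c = f * c * f) (hef : Commute e f) :
    (c * e * c * f) ^ 2 =
      e * f * (f⁻¹ * c * e * c⁻¹ * f) * (f⁻¹ * c * e * c⁻¹ * f) * c * (e * f * f) := by
  have hslide : e * f * (f⁻¹ * c * e * c⁻¹ * f) = c * (e * f) := by
    calc
      _ = e * (c * e * c⁻¹) * f := by group
      _ = c * (e * f) := by rw [mul_mul_inv_eq_of_braid hce]; group
  symm
  calc
    _ = c * c * (e * f) * c * (e * f * f) := by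
      rw [hslide, mul_assoc c, hslide]; simp only [mul_assoc]
    _ = c * c * e * (f * c * f) * e * f := by simp only [mul_assoc, hef.symm.left_comm]
    _ = c * (c * e * c) * f * c * e * f := by rw [← hcf]; simp only [mul_assoc]
    _ = c * (e * c * e) * f * c * e * f := by rw [hce]
    _ = c * e * c * f * (e * c * e) * f := by simp only [mul_assoc, hef.symm.left_comm]
    _ = (c * e * c * f) ^ 2 := by rw [← hce]; simp only [pow_two, mul_assoc]

theorem chain_sq_eq_right {c e f : G} (hce : c * e * c = e * c * e)
    (hcf : c * f * c = f * c * f) (hef : Commute e f) :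
    (c * e * c * f) ^ 2 =
      f * e * f * (f⁻¹ * c * f) * (c⁻¹ * e * c) * (c⁻¹ * e * c) * (e * f) := by
  symm
  calc
    _ = f * e * c * f * (c⁻¹ * e * c) * (c⁻¹ * e * c) * e * f := by group
    _ = (f * e) * c * f * e * c * c * f := by
      rw [← mul_mul_inv_eq_of_braid hce.symm]; group
    _ = e * (f * c * f) * e * c * c * f := by rw [← hef.eq]; simp only [mul_assoc]
    _ = e * c * f * (c * e * c) * c * f := by rw [← hcf]; simp only [mul_assoc]
    _ = e * c * (f * e) * c * e * c * f := by rw [hce]; simp only [mul_assoc]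
    _ = (e * c * e) * f * c * e * c * f := by rw [← hef.eq]; simp only [mul_assoc]
    _ = (c * e * c * f) ^ 2 := by rw [← hce]; simp only [pow_two, mul_assoc]

theorem inv_eq_of_pow_three_eq_mul {a d d' : G} (h : a ^ 3 = d * d') (hd' : Commute d' a) :
    a⁻¹ = d⁻¹ * a ^ 2 * d'⁻¹ := by
  calc
    a⁻¹ = d' * a⁻¹ * d'⁻¹ := by rw [hd'.inv_right.eq, mul_inv_cancel_right]
    _ = d⁻¹ * (d * d') * a⁻¹ * d'⁻¹ := by group
    _ = d⁻¹ * a ^ 2 * d'⁻¹ := by rw [← h]; group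

theorem chain_inv_eq_of_pow_three {c e f d d' : G} (hchain : (c * e * c * f) ^ 3 = d * d')
    (hd' : ∀ b ∈ [c, e, f], Commute d' b) :
    (c * e * c * f)⁻¹ = d⁻¹ * (c * e * c * f) ^ 2 * d'⁻¹ := by
  refine inv_eq_of_pow_three_eq_mul hchain ?_
  repeat' apply Commute.mul_right
  all_goals simp [hd']

theorem braid_sq_mul_inv_mul_of_lantern {a b d w x : G} (hab : a * b * a = b * a * b)
    (hda : Commute d a) (hlantern : d * x = a * a * w) :
    (a * b) ^ 2 * d⁻¹ * w = a * a * b * a⁻¹ * x := by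
  calc
    _ = a * (b * a * b) * d⁻¹ * w := by simp only [pow_two, mul_assoc]
    _ = a * a * b * (a * d⁻¹) * w := by rw [← hab]; group
    _ = a * a * b * a⁻¹ * (a * a * d⁻¹) * w := by group
    _ = a * a * b * a⁻¹ * x := by
      rw [(hda.mul_right hda).inv_left.symm.eq, eq_inv_mul_of_mul_eq hlantern]
      simp only [mul_assoc]

theorem mul_inv_mul_braid_sq_of_lantern {a b d w x : G} (hab : a * b * a = b * a * b)
    (hdw : Commute d w) (hlantern : d * x = w * b * b) :
    w * d⁻¹ * (b * a) ^ 2 = x * a * b := by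
  calc
    _ = d⁻¹ * w * b * (a * b * a) := by
      rw [hdw.inv_left.symm.eq]; simp only [pow_two, mul_assoc]
    _ = d⁻¹ * (w * b * b) * a * b := by rw [hab]; simp only [mul_assoc]
    _ = x * a * b := by rw [← hlantern, inv_mul_cancel_left]

theorem mul_inv_mul_eq_mul_inv_mul_of_lantern {c d e e' f f' x : G} (hde : Commute d e)
    (hdf : Commute d f) (hfe' : Commute f e') (hlantern : d * x * c = e * f * e' * f') :
    e * f * f * d⁻¹ * e' = x * c * f'⁻¹ * f := by
  calc
    _ = d⁻¹ * (e * f * f) * e' := by rw [((hde.mul_right hdf).mul_right hdf).inv_left.symm.eq]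
    _ = d⁻¹ * (e * f * e' * f') * f'⁻¹ * f := by
      rw [mul_assoc d⁻¹, mul_assoc (e * f), hfe'.eq]; group
    _ = x * c * f'⁻¹ * f := by rw [← hlantern]; group

theorem mul_inv_mul_eq_mul_of_lantern {d e f w x : G} (hdw : Commute d w)
    (hdf : Commute d f) (hwf : Commute w f) (hlantern : d * x = w * e * f) :
    w * d⁻¹ * (f * e * f) = f * x := by
  calc
    _ = d⁻¹ * (w * f) * e * f := by rw [hdw.inv_left.symm.eq]; simp only [mul_assoc]
    _ = (d⁻¹ * f) * (w * e * f) := by rw [hwf.eq]; simp only [mul_assoc]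
    _ = f * x := by rw [hdf.inv_left.eq, ← hlantern, mul_assoc, inv_mul_cancel_left]

theorem mul_inv_mul_mul_eq_mul_inv_of_lantern {a b b' f p w : G} (hbw : Commute b w)
    (hbb' : Commute b b') (hbp : Commute b p) (hb'p : Commute b' p)
    (hlantern : f * w = a * b * b' * p) :
    b * f⁻¹ * a * p = w * b'⁻¹ := by
  calc
    _ = b * (f⁻¹ * (a * (p * b' * b))) * b⁻¹ * b'⁻¹ := by group
    _ = b * (f⁻¹ * (a * b * b' * p)) * b⁻¹ * b'⁻¹ := by
      rw [← hb'p.eq, ← (hbb'.mul_right hbp).eq]; simp only [mul_assoc]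
    _ = w * b'⁻¹ := by
      rw [← hlantern, inv_mul_cancel_left, hbw.eq, mul_inv_cancel_right]

theorem middle_word_eq_of_lanterns {c₅ c₆ c₇ d₂ d₃ e₁ e₂ e₃ f₁ f₂ f₃ w x₂ z : G}
    (hbraid : c₆ * e₂ * c₆ = e₂ * c₆ * e₂)
    (hd₂ : ∀ b ∈ [e₁, f₁], Commute d₂ b) (hd₃ : ∀ b ∈ [e₂, f₂, f₃], Commute d₃ b)
    (hf₁e₂ : Commute f₁ e₂) (hf₃ : ∀ b ∈ [e₂, f₂], Commute b f₃) (hc₆f₃ : Commute c₆ f₃)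
    (hpair : [c₅, c₇, f₃].Pairwise Commute) (hc₅w : Commute c₅ w)
    (hlantern₂ : d₂ * x₂ * c₅ = e₁ * f₁ * e₂ * f₂) (hlantern₃ : d₃ * z = e₂ * f₂ * e₃ * f₃)
    (hlantern₅ : f₂ * w = f₁ * c₅ * c₇ * f₃) :
    e₁ * f₁ * f₁ * d₂⁻¹ * (c₆ * e₂ * c₆ * f₂) * d₃⁻¹ * (f₃ * e₃ * f₃) =
      x₂ * w * (c₇⁻¹ * c₆) * z := by
  have hc₅c₇ : Commute c₅ c₇ := by grind
  have hc₅f₃ : Commute c₅ f₃ := by grind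
  have hc₇f₃ : Commute c₇ f₃ := by grind
  calc
    _ = e₁ * f₁ * f₁ * d₂⁻¹ * e₂ * c₆ * (e₂ * f₂ * d₃⁻¹ * (f₃ * e₃ * f₃)) := by
      rw [hbraid]; simp only [mul_assoc]
    _ = x₂ * c₅ * f₂⁻¹ * f₁ * c₆ * (f₃ * z) := by
      rw [mul_inv_mul_eq_mul_inv_mul_of_lantern (by simp [hd₂]) (by simp [hd₂]) hf₁e₂ hlantern₂,
        mul_inv_mul_eq_mul_of_lantern (by simp [hd₃]) (by simp [hd₃]) (by simp [hf₃]) hlantern₃]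
    _ = x₂ * (c₅ * f₂⁻¹ * f₁ * f₃) * c₆ * z := by
      simp only [mul_assoc, hc₆f₃.left_comm]
    _ = x₂ * w * (c₇⁻¹ * c₆) * z := by
      rw [mul_inv_mul_mul_eq_mul_inv_of_lantern hc₅w hc₅c₇ hc₅f₃ hc₇f₃ hlantern₅]
      simp only [mul_assoc]

theorem mul_mul_mul_inv_mul_eq_conj {a b w : G} (haw : Commute a w) :
    a * a * b * a⁻¹ * w = a * (a * b * w) * a⁻¹ := by
  rw [mul_assoc _ a⁻¹, haw.inv_left.eq]
  simp only [mul_assoc]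

end ChainsAndLanterns

theorem genus_five_word_general {G : Type*} [Group G]
    {c₁ c₂ c₃ c₄ c₅ c₆ c₇ c₈ c₉ c₁₀ c₁₁ e₁ f₁ e₂ f₂ e₃ f₃
      x₁ x₂ x₃ xb₃ x₄ δ₁ δ₂ δ₃ δ₄ t v y₂ s₃ r₃ rb₃ : G}
    (hy₂ : y₂ = f₁⁻¹ * c₄ * e₁ * c₄⁻¹ * f₁) (hs₃ : s₃ = c₇⁻¹ * c₆ * c₇)
    (hr₃ : r₃ = f₃⁻¹ * c₈ * f₃) (hrb₃ : rb₃ = c₈⁻¹ * e₃ * c₈)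
    (hb₁ : c₁ * c₂ * c₁ = c₂ * c₁ * c₂)
    (hb₂ : c₄ * e₁ * c₄ = e₁ * c₄ * e₁)
    (hb₃ : c₄ * f₁ * c₄ = f₁ * c₄ * f₁)
    (hb₄ : c₆ * e₂ * c₆ = e₂ * c₆ * e₂)
    (hb₅ : c₈ * e₃ * c₈ = e₃ * c₈ * e₃)
    (hb₆ : c₈ * f₃ * c₈ = f₃ * c₈ * f₃)
    (hb₇ : c₁₀ * c₁₁ * c₁₀ = c₁₁ * c₁₀ * c₁₁)
    (hchain₁ : (c₄ * e₁ * c₄ * f₁) ^ 3 = δ₁ * δ₂)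
    (hchain₂ : (c₈ * e₃ * c₈ * f₃) ^ 3 = δ₃ * δ₄)
    (hlantern₁ : δ₁ * x₁ * c₃ = c₁ * c₁ * e₁ * f₁)
    (hlantern₂ : δ₂ * x₂ * c₅ = e₁ * f₁ * e₂ * f₂)
    (hlantern₃ : δ₃ * x₃ * c₇ = e₂ * f₂ * e₃ * f₃)
    (hlantern₄ : δ₄ * x₄ * c₉ = e₃ * f₃ * c₁₁ * c₁₁)
    (hlantern₅ : f₂ * t * v = f₁ * c₅ * c₇ * f₃)
    (hx₃ : c₇ * xb₃ = x₃ * c₇)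
    (hδ₁ : Commute δ₁ c₁)
    (hδ₂ : ∀ b ∈ [c₄, e₁, f₁], Commute δ₂ b)
    (hδ₃ : ∀ b ∈ [e₂, f₂, f₃], Commute δ₃ b)
    (hδ₄ : ∀ b ∈ [c₈, e₃, f₃], Commute δ₄ b)
    (hef₁ : Commute e₁ f₁) (hef₃ : Commute e₃ f₃) (hf₁e₂ : Commute f₁ e₂)
    (hf₃ : ∀ b ∈ [e₂, f₂], Commute b f₃) (hc₆f₃ : Commute c₆ f₃)
    (hpair : [c₅, c₇, f₃].Pairwise Commute) (hc₅tv : Commute c₅ (t * v))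
    (hc₁ : ∀ b ∈ [c₃, c₄, c₆, c₇, c₈, c₉, c₁₀, c₁₁, e₁, f₁, e₃, f₃,
      x₁, x₂, x₄, t, v, xb₃], Commute c₁ b) :
    (c₁ * c₂) ^ 2 * (c₄ * e₁ * c₄ * f₁)⁻¹ * (c₆ * e₂ * c₆ * f₂) *
        (c₈ * e₃ * c₈ * f₃)⁻¹ * (c₁₁ * c₁₀) ^ 2 =
      c₁ * c₁ * c₂ * c₁⁻¹ * x₁ * c₃ * y₂ * y₂ * c₄ * x₂ * t * v * s₃ * xb₃ *
        r₃ * rb₃ * rb₃ * x₄ * c₉ * c₁₀ * c₁₁ ∧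
    (c₁ * c₂) ^ 2 * (c₄ * e₁ * c₄ * f₁)⁻¹ * (c₆ * e₂ * c₆ * f₂) *
        (c₈ * e₃ * c₈ * f₃)⁻¹ * (c₁₁ * c₁₀) ^ 2 =
      c₁ * (c₁ * c₂ * x₁ * c₃ * y₂ * y₂ * c₄ * x₂ * t * v * s₃ * xb₃ *
        r₃ * rb₃ * rb₃ * x₄ * c₉ * c₁₀ * c₁₁) * c₁⁻¹ := by
  have hleft : (c₁ * c₂) ^ 2 * δ₁⁻¹ * (e₁ * f₁) = c₁ * c₁ * c₂ * c₁⁻¹ * (x₁ * c₃) :=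
    braid_sq_mul_inv_mul_of_lantern hb₁ hδ₁ (by simpa only [mul_assoc] using hlantern₁)
  have hmiddle : e₁ * f₁ * f₁ * δ₂⁻¹ * (c₆ * e₂ * c₆ * f₂) * δ₃⁻¹ * (f₃ * e₃ * f₃) =
      x₂ * (t * v) * (c₇⁻¹ * c₆) * (c₇ * xb₃) :=
    middle_word_eq_of_lanterns hb₄ (by simp [hδ₂]) hδ₃ hf₁e₂ hf₃ hc₆f₃ hpair hc₅tv hlantern₂
      (by rw [hx₃, ← mul_assoc, hlantern₃]) (by rw [← mul_assoc, hlantern₅])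
  have hright : e₃ * f₃ * δ₄⁻¹ * (c₁₁ * c₁₀) ^ 2 = x₄ * c₉ * c₁₀ * c₁₁ :=
    mul_inv_mul_braid_sq_of_lantern hb₇ ((hδ₄ e₃ (by simp)).mul_right (hδ₄ f₃ (by simp)))
      (by rw [← mul_assoc, hlantern₄])
  have hword : (c₁ * c₂) ^ 2 * (c₄ * e₁ * c₄ * f₁)⁻¹ * (c₆ * e₂ * c₆ * f₂) *
        (c₈ * e₃ * c₈ * f₃)⁻¹ * (c₁₁ * c₁₀) ^ 2 =
      c₁ * c₁ * c₂ * c₁⁻¹ * (x₁ * c₃ * y₂ * y₂ * c₄ * x₂ * t * v * s₃ * xb₃ *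
        r₃ * rb₃ * rb₃ * x₄ * c₉ * c₁₀ * c₁₁) := by
    rw [chain_inv_eq_of_pow_three hchain₁ hδ₂, chain_inv_eq_of_pow_three hchain₂ hδ₄,
      chain_sq_eq_left hb₂ hb₃ hef₁, chain_sq_eq_right hb₅ hb₆ hef₃, ← hy₂, ← hr₃, ← hrb₃]
    calc
      _ = ((c₁ * c₂) ^ 2 * δ₁⁻¹ * (e₁ * f₁)) * y₂ * y₂ * c₄ *
          (e₁ * f₁ * f₁ * δ₂⁻¹ * (c₆ * e₂ * c₆ * f₂) * δ₃⁻¹ * (f₃ * e₃ * f₃)) *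
          r₃ * rb₃ * rb₃ * (e₃ * f₃ * δ₄⁻¹ * (c₁₁ * c₁₀) ^ 2) := by
        simp only [mul_assoc]
      _ = _ := by rw [hleft, hmiddle, hright, hs₃]; simp only [mul_assoc]
  have hcomm : Commute c₁ (x₁ * c₃ * y₂ * y₂ * c₄ * x₂ * t * v * s₃ * xb₃ *
      r₃ * rb₃ * rb₃ * x₄ * c₉ * c₁₀ * c₁₁) := by
    rw [hy₂, hs₃, hr₃, hrb₃]
    repeat' apply Commute.mul_right
    all_goals simp [hc₁]
  refine ⟨by simpa only [mul_assoc] using hword, ?_⟩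
  simpa only [mul_assoc] using hword.trans (mul_mul_mul_inv_mul_eq_conj hcomm)

theorem genus_five_word {G : Type*} [Group G]
    (c₁ c₂ c₃ c₄ c₅ c₆ c₇ c₈ c₉ c₁₀ c₁₁ e₁ f₁ e₂ f₂ e₃ f₃
      x₁ x₂ x₃ xb₃ x₄ δ₁ δ₂ δ₃ δ₄ t v : G)
    (hb₁ : c₁ * c₂ * c₁ = c₂ * c₁ * c₂)
    (hb₂ : c₄ * e₁ * c₄ = e₁ * c₄ * e₁)
    (hb₃ : c₄ * f₁ * c₄ = f₁ * c₄ * f₁)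
    (hb₄ : c₆ * e₂ * c₆ = e₂ * c₆ * e₂)
    (hb₅ : c₈ * e₃ * c₈ = e₃ * c₈ * e₃)
    (hb₆ : c₈ * f₃ * c₈ = f₃ * c₈ * f₃)
    (hb₇ : c₁₀ * c₁₁ * c₁₀ = c₁₁ * c₁₀ * c₁₁)
    (hchain₁ : (c₄ * e₁ * c₄ * f₁) ^ 3 = δ₁ * δ₂)
    (hchain₂ : (c₈ * e₃ * c₈ * f₃) ^ 3 = δ₃ * δ₄)
    (hlantern₁ : δ₁ * x₁ * c₃ = c₁ * c₁ * e₁ * f₁)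
    (hlantern₂ : δ₂ * x₂ * c₅ = e₁ * f₁ * e₂ * f₂)
    (hlantern₃ : δ₃ * x₃ * c₇ = e₂ * f₂ * e₃ * f₃)
    (hlantern₄ : δ₄ * x₄ * c₉ = e₃ * f₃ * c₁₁ * c₁₁)
    (hlantern₅ : f₂ * t * v = f₁ * c₅ * c₇ * f₃)
    (hx₃ : c₇ * xb₃ = x₃ * c₇)
    (hδ : ∀ a ∈ [δ₁, δ₂, δ₃, δ₄],
      ∀ b ∈ [δ₁, δ₂, δ₃, δ₄, c₁, c₂, c₃, c₄, c₅, c₆, c₇, c₈, c₉, c₁₀, c₁₁,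
        e₁, f₁, e₂, f₂, e₃, f₃, x₁, x₂, x₃, xb₃, x₄, t, v], a * b = b * a)
    (hef₁ : e₁ * f₁ = f₁ * e₁)
    (hef₂ : e₂ * f₂ = f₂ * e₂)
    (hef₃ : e₃ * f₃ = f₃ * e₃)
    (h₁₂ : ∀ a ∈ [e₁, f₁], ∀ b ∈ [e₂, f₂, x₂, c₅], a * b = b * a)
    (h₂₃ : ∀ a ∈ [e₂, f₂], ∀ b ∈ [e₃, f₃, x₃, c₇], a * b = b * a)
    (h₃₄ : ∀ a ∈ [e₃, f₃], ∀ b ∈ [x₄, c₉, c₁₁], a * b = b * a)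
    (hpair : List.Pairwise (fun a b => a * b = b * a) [f₁, c₅, c₇, f₃])
    (hf₁ : ∀ b ∈ [x₂, t, v], f₁ * b = b * f₁)
    (htv : ∀ a ∈ [t, v], a * c₅ = c₅ * a)
    (hf₃ : ∀ b ∈ [c₆, x₃], f₃ * b = b * f₃)
    (hc₁ : ∀ b ∈ [c₃, c₄, c₅, c₆, c₇, c₈, c₉, c₁₀, c₁₁, e₁, f₁, e₃, f₃,
      x₁, x₂, x₄, t, v, xb₃], c₁ * b = b * c₁) :
    (c₁ * c₂) ^ 2 * (c₄ * e₁ * c₄ * f₁)⁻¹ * (c₆ * e₂ * c₆ * f₂) *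
        (c₈ * e₃ * c₈ * f₃)⁻¹ * (c₁₁ * c₁₀) ^ 2 =
      c₁ * c₁ * c₂ * c₁⁻¹ * x₁ * c₃ * (f₁⁻¹ * c₄ * e₁ * c₄⁻¹ * f₁) *
        (f₁⁻¹ * c₄ * e₁ * c₄⁻¹ * f₁) * c₄ * x₂ * t * v * (c₇⁻¹ * c₆ * c₇) * xb₃ *
        (f₃⁻¹ * c₈ * f₃) * (c₈⁻¹ * e₃ * c₈) * (c₈⁻¹ * e₃ * c₈) * x₄ * c₉ * c₁₀ * c₁₁ ∧
    ((c₁ * c₂) ^ 2 * (c₄ * e₁ * c₄ * f₁)⁻¹ * (c₆ * e₂ * c₆ * f₂) *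
        (c₈ * e₃ * c₈ * f₃)⁻¹ * (c₁₁ * c₁₀) ^ 2) ^ 3 =
      c₁ * (c₁ * c₂ * x₁ * c₃ * (f₁⁻¹ * c₄ * e₁ * c₄⁻¹ * f₁) *
        (f₁⁻¹ * c₄ * e₁ * c₄⁻¹ * f₁) * c₄ * x₂ * t * v * (c₇⁻¹ * c₆ * c₇) * xb₃ *
        (f₃⁻¹ * c₈ * f₃) * (c₈⁻¹ * e₃ * c₈) * (c₈⁻¹ * e₃ * c₈) * x₄ * c₉ * c₁₀ * c₁₁) ^ 3 *
        c₁⁻¹ := by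
  obtain ⟨hword, hconj⟩ := genus_five_word_general rfl rfl rfl rfl hb₁ hb₂ hb₃ hb₄ hb₅ hb₆ hb₇
    hchain₁ hchain₂ hlantern₁ hlantern₂ hlantern₃ hlantern₄ hlantern₅ hx₃
    (hδ δ₁ (by simp) c₁ (by simp))
    (fun b hb => hδ δ₂ (by simp) b (List.subset_def.mp (by simp) hb))
    (fun b hb => hδ δ₃ (by simp) b (List.subset_def.mp (by simp) hb))
    (fun b hb => hδ δ₄ (by simp) b (List.subset_def.mp (by simp) hb))
    hef₁ hef₃ (h₁₂ f₁ (by simp) e₂ (by simp)) (fun b hb => h₂₃ b hb f₃ (by simp))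
    (hf₃ c₆ (by simp)).symm hpair.of_cons
    (Commute.mul_left (htv t (by simp)) (htv v (by simp))).symm
    (fun b hb => hc₁ b (List.subset_def.mp (by simp) hb))
  exact ⟨hword, by rw [hconj, conj_pow]⟩
end
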